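/- arXiv:1510.03329 — 5 statements merged into one kernel-verified Lean document; each statement's English description precedes it below -/
import Mathlib

section
/- Let K₂ ≥ K₁ > 0 and Δ ∈ ℝ. For each t > 0 let ψ_t : [0,∞) → [K₁, K₂] be measurable, and assume that for every function t ↦ y_t with y_t → ∞ as t → ∞ one has ψ_t(y_t) → e^Δ as t → ∞. Let A > 0, β > −1, and let φ : [0,∞) → ℝ be bounded and measurable with φ(y) ~ A y^β as y → ∞. Let ε : (0,∞) → ℝ satisfy √t · ε_t → 0 as t → ∞. Then, as t → ∞, ∫₀^∞ φ(y) e^{−y²/(4t) + ε_t y} ψ_t(y) dy ~ A 2^β e^Δ Γ((1+β)/2) t^{(1+β)/2}. -/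
open MeasureTheory Filter Real Set Asymptotics

lemma aux_beta (A β : ℝ) (hA : 0 < A)
    (φ : ℝ → ℝ) (hφbdd : ∃ C, ∀ y, |φ y| ≤ C)
    (hφasym : Tendsto (fun y => φ y / (A * y ^ β)) atTop (nhds 1)) : β ≤ 0 := by
  by_contra! hb
  obtain ⟨C, hC⟩ := hφbdd
  have h1 : Tendsto (fun y : ℝ => A * y ^ β) atTop atTop :=
    (tendsto_rpow_atTop hb).const_mul_atTop hA
  have h2 : Tendsto (fun y => φ y / (A * y ^ β)) atTop (nhds 0) := by
    have h3 : Tendsto (fun y : ℝ => C / (A * y ^ β)) atTop (nhds 0) := h1.const_div_atTop C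
    refine squeeze_zero_norm' ?_ h3
    filter_upwards [eventually_gt_atTop 0] with y hy
    have : 0 < A * y ^ β := by positivity
    rw [Real.norm_eq_abs, abs_div, abs_of_pos this]
    gcongr
    exact hC y
  exact one_ne_zero (tendsto_nhds_unique hφasym h2)

lemma aux_bound (A β : ℝ) (hA : 0 < A)
    (φ : ℝ → ℝ) (hφbdd : ∃ C, ∀ y, |φ y| ≤ C)
    (hφasym : Tendsto (fun y => φ y / (A * y ^ β)) atTop (nhds 1)) :
    ∃ M, 0 ≤ M ∧ ∀ y > 0, |φ y| ≤ M * y ^ β := by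
  have hb := aux_beta A β hA φ hφbdd hφasym
  obtain ⟨C, hC⟩ := hφbdd
  have hC0 : 0 ≤ C := (abs_nonneg _).trans (hC 0)
  have h1 : ∀ᶠ y in atTop, |φ y / (A * y ^ β)| < 2 := by
    have := hφasym.abs
    rw [abs_one] at this
    exact this.eventually (gt_mem_nhds (by norm_num))
  obtain ⟨Y, hY⟩ := (h1.and (eventually_gt_atTop 0)).exists_forall_of_atTop
  have hY0 : 0 < Y := (hY Y le_rfl).2
  refine ⟨2 * A + C * Y ^ (-β), by positivity, fun y hy => ?_⟩
  have hyb : 0 < y ^ β := rpow_pos_of_pos hy β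
  have hYb : 0 < Y ^ (-β) := rpow_pos_of_pos hY0 _
  rcases le_total Y y with h | h
  · have h2 := (hY y h).1
    have : 0 < A * y ^ β := by positivity
    rw [abs_div, abs_of_pos this, div_lt_iff₀ this] at h2
    have : 0 ≤ C * Y ^ (-β) * y ^ β := by positivity
    nlinarith
  · have h3 : 1 ≤ Y ^ (-β) * y ^ β := by
      have : Y ^ β ≤ y ^ β := rpow_le_rpow_of_nonpos hy h hb
      calc (1:ℝ) = Y ^ (-β) * Y ^ β := by rw [← rpow_add hY0]; simp
        _ ≤ _ := by gcongr
    have h4 := hC y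
    have : 0 ≤ A * y ^ β := by positivity
    nlinarith [mul_le_mul_of_nonneg_left h3 hC0]

theorem stmt10 (K₁ K₂ Δ : ℝ) (hK₁ : 0 < K₁) (hK : K₁ ≤ K₂)
    (ψ : ℝ → ℝ → ℝ)
    (hψmeas : ∀ t > 0, Measurable (ψ t))
    (hψbdd : ∀ t > 0, ∀ y ≥ 0, ψ t y ∈ Set.Icc K₁ K₂)
    (hψlim : ∀ y : ℝ → ℝ, Tendsto y atTop atTop →
      Tendsto (fun t => ψ t (y t)) atTop (nhds (Real.exp Δ)))
    (A β : ℝ) (hA : 0 < A) (hβ : -1 < β)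
    (φ : ℝ → ℝ) (hφmeas : Measurable φ) (hφbdd : ∃ C, ∀ y, |φ y| ≤ C)
    (hφasym : Tendsto (fun y => φ y / (A * y ^ β)) atTop (nhds 1))
    (ε : ℝ → ℝ) (hε : Tendsto (fun t => Real.sqrt t * ε t) atTop (nhds 0)) :
    Tendsto (fun t =>
        (∫ y in Set.Ioi (0:ℝ), φ y * Real.exp (-y^2/(4*t) + ε t * y) * ψ t y) /
        (A * 2 ^ β * Real.exp Δ * Real.Gamma ((1 + β)/2) * t ^ ((1 + β)/2)))
      atTop (nhds 1) := by
  obtain ⟨M, hM0, hM⟩ := aux_bound A β hA φ hφbdd hφasym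
  have hΓ : 0 < Real.Gamma ((1 + β)/2) := Real.Gamma_pos_of_pos (by linarith)
  set F : ℝ → ℝ → ℝ := fun t u =>
    φ (√t * u) / (√t) ^ β * Real.exp (-u^2/4 + √t * ε t * u) * ψ t (√t * u) with hF
  have hlim : Tendsto (fun t => ∫ u in Set.Ioi (0:ℝ), F t u) atTop
      (nhds (∫ u in Set.Ioi (0:ℝ), A * u ^ β * Real.exp (-u^2/4) * Real.exp Δ)) := by
    refine tendsto_integral_filter_of_dominated_convergence
      (fun u => M * Real.exp 2 * K₂ * (u ^ β * Real.exp (-(1/8) * u^2))) ?_ ?_ ?_ ?_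
    · filter_upwards [eventually_gt_atTop 0] with t ht
      have := hψmeas t ht
      apply Measurable.aestronglyMeasurable
      fun_prop
    · have h1 : ∀ᶠ t in atTop, |√t * ε t| < 1 := by
        have := hε.abs
        rw [abs_zero] at this
        exact this.eventually (gt_mem_nhds (by norm_num))
      filter_upwards [eventually_gt_atTop 0, h1] with t ht h1
      refine (ae_restrict_iff' measurableSet_Ioi).2 (Eventually.of_forall fun u hu => ?_)
      have hu : 0 < u := hu
      have hs : 0 < √t := Real.sqrt_pos.2 ht
      have hψ := hψbdd t ht (√t * u) (by positivity)
      have e1 : |φ (√t * u) / (√t) ^ β| ≤ M * u ^ β := by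
        have hsb : 0 < (√t) ^ β := rpow_pos_of_pos hs _
        rw [abs_div, abs_of_pos hsb, div_le_iff₀ hsb]
        have := hM (√t * u) (by positivity)
        rw [mul_rpow hs.le hu.le] at this
        linarith
      have e2 : Real.exp (-u^2/4 + √t * ε t * u) ≤ Real.exp 2 * Real.exp (-(1/8) * u^2) := by
        rw [← Real.exp_add]
        apply Real.exp_le_exp.2
        have : √t * ε t * u ≤ u := by nlinarith [(abs_lt.1 h1).2]
        nlinarith [sq_nonneg (u - 4)]
      have hψ0 : 0 ≤ ψ t (√t * u) := hK₁.le.trans hψ.1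
      simp only [hF]
      rw [norm_mul, norm_mul, Real.norm_eq_abs, Real.norm_eq_abs, Real.norm_eq_abs,
        abs_of_pos (Real.exp_pos _), abs_of_nonneg hψ0]
      calc _ ≤ (M * u ^ β) * (Real.exp 2 * Real.exp (-(1/8) * u^2)) * K₂ := by
            gcongr
            exact hψ.2
        _ = _ := by ring
    · exact (integrableOn_rpow_mul_exp_neg_mul_sq (by norm_num) hβ).const_mul _
    · refine (ae_restrict_iff' measurableSet_Ioi).2 (Eventually.of_forall fun u hu => ?_)
      have hu : 0 < u := hu
      have hy : Tendsto (fun t : ℝ => √t * u) atTop atTop :=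
        tendsto_sqrt_atTop.atTop_mul_const hu
      have h1 : Tendsto (fun t => φ (√t * u) / (√t) ^ β) atTop (nhds (A * u ^ β)) := by
        have := (hφasym.comp hy).mul_const (A * u ^ β)
        rw [one_mul] at this
        refine this.congr' ?_
        filter_upwards [eventually_gt_atTop 0] with t ht
        have hs : 0 < √t := Real.sqrt_pos.2 ht
        simp only [Function.comp]
        rw [mul_rpow hs.le hu.le]
        have hsb : 0 < (√t) ^ β := rpow_pos_of_pos hs _
        have hub : 0 < u ^ β := rpow_pos_of_pos hu _
        field_simp
      have h2 : Tendsto (fun t => Real.exp (-u^2/4 + √t * ε t * u)) atTop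
          (nhds (Real.exp (-u^2/4))) := by
        have := (hε.mul_const u).const_add (-u^2/4)
        rw [zero_mul, add_zero] at this
        exact (Real.continuous_exp.tendsto _).comp this
      exact (h1.mul h2).mul (hψlim _ hy)
  have hval : (∫ u in Set.Ioi (0:ℝ), A * u ^ β * Real.exp (-u^2/4) * Real.exp Δ)
      = A * 2 ^ β * Real.exp Δ * Real.Gamma ((1 + β)/2) := by
    have h := integral_rpow_mul_exp_neg_mul_rpow (p := 2) (q := β) (b := 1/4)
      (by norm_num) hβ (by norm_num)
    have h4 : ((1/4 : ℝ)) ^ (-(β + 1) / 2) = 2 * 2 ^ β := by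
      rw [show (1/4 : ℝ) = 2 ^ (-2 : ℝ) by
        rw [rpow_neg (by norm_num)]; norm_num, ← rpow_mul (by norm_num),
        show (-2 : ℝ) * (-(β + 1) / 2) = 1 + β by ring, rpow_add (by norm_num), rpow_one]
    rw [h4] at h
    calc _ = ∫ u in Set.Ioi (0:ℝ), (A * Real.exp Δ) *
          (u ^ β * Real.exp (-(1/4) * u ^ (2:ℝ))) := by
          congr 1; ext u; rw [rpow_two, show -u^2/4 = -(1/4) * u^2 by ring]; ring
      _ = _ := by
          rw [integral_const_mul, h, add_comm β 1]; ring
  rw [hval] at hlim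
  have hc : 0 < A * 2 ^ β * Real.exp Δ * Real.Gamma ((1 + β)/2) := by positivity
  have := hlim.div_const (A * 2 ^ β * Real.exp Δ * Real.Gamma ((1 + β)/2))
  rw [div_self hc.ne'] at this
  refine this.congr' ?_
  filter_upwards [eventually_gt_atTop 0] with t ht
  have hs : 0 < √t := Real.sqrt_pos.2 ht
  have hsb : 0 < (√t) ^ β := rpow_pos_of_pos hs _
  have hcv := integral_comp_mul_left_Ioi
    (fun y => φ y * Real.exp (-y^2/(4*t) + ε t * y) * ψ t y) 0 hs
  rw [mul_zero, smul_eq_mul] at hcv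
  have hFi : (∫ u in Set.Ioi (0:ℝ), F t u) = ((√t) ^ β)⁻¹ * ∫ u in Set.Ioi (0:ℝ),
      φ (√t * u) * Real.exp (-(√t * u)^2/(4*t) + ε t * (√t * u)) * ψ t (√t * u) := by
    rw [← integral_const_mul]
    congr 1; ext u
    simp only [hF]
    have : -(√t * u)^2/(4*t) + ε t * (√t * u) = -u^2/4 + √t * ε t * u := by
      rw [mul_pow, Real.sq_sqrt ht.le]; field_simp
    rw [this]; ring
  have hp : t ^ ((1 + β)/2) = √t * (√t) ^ β := by
    rw [Real.sqrt_eq_rpow, ← rpow_mul ht.le, ← rpow_add ht]; congr 1; ring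
  rw [hFi, hcv, hp]
  field_simp
end

section
/- Let K₂ ≥ K₁ > 0 and Δ ∈ ℝ. For each t > 0 let ψ_t : [0,∞) → [K₁, K₂] be measurable, and assume that for every function t ↦ y_t with y_t → ∞ as t → ∞ one has ψ_t(y_t) → e^Δ as t → ∞. Let A > 0 and let φ : [0,∞) → ℝ be bounded and measurable with φ(y) ~ A y^{−1} as y → ∞. Let ε : (0,∞) → ℝ satisfy √t · ε_t → 0 as t → ∞. Then, as t → ∞, ∫₀^∞ φ(y) e^{−y²/(4t) + ε_t y} ψ_t(y) dy ~ (A/2) e^Δ log t. -/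
open MeasureTheory Filter Real Set Asymptotics

lemma aux_cov (F : ℝ → ℝ) (L : ℝ) (hL : 0 < L) :
    ∫ y in Set.Ioi (0:ℝ), F y = L * ∫ s : ℝ, Real.exp (L * s) * F (Real.exp (L * s)) := by
  have him : (fun s : ℝ => Real.exp (L * s)) '' Set.univ = Set.Ioi 0 := by
    ext y
    simp only [Set.mem_image, Set.mem_univ, true_and, Set.mem_Ioi]
    constructor
    · rintro ⟨s, rfl⟩; exact Real.exp_pos _
    · intro hy
      refine ⟨Real.log y / L, ?_⟩
      rw [mul_div_cancel₀ _ hL.ne', Real.exp_log hy]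
  have hd : ∀ x ∈ (Set.univ : Set ℝ), HasDerivWithinAt (fun s : ℝ => Real.exp (L * s))
      (Real.exp (L * x) * L) Set.univ x := by
    intro x _
    have h1 : HasDerivAt (fun s : ℝ => L * s) L x := by
      simpa using (hasDerivAt_id x).const_mul L
    exact (h1.exp).hasDerivWithinAt
  have hinj : Set.InjOn (fun s : ℝ => Real.exp (L * s)) Set.univ := by
    intro a _ b _ h
    exact mul_left_cancel₀ hL.ne' (Real.exp_injective h)
  rw [← him, integral_image_eq_integral_abs_deriv_smul MeasurableSet.univ hd hinj,
    ← integral_const_mul, setIntegral_univ]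
  congr 1
  ext s
  rw [abs_of_pos (mul_pos (Real.exp_pos _) hL), smul_eq_mul]
  ring

lemma aux_int : Integrable (fun s : ℝ => Real.exp (-|s|)) := by
  rw [← integrableOn_univ, ← Set.Iic_union_Ioi (a := (0:ℝ))]
  refine IntegrableOn.union ?_ ?_
  · refine (integrableOn_exp_Iic 0).congr_fun ?_ measurableSet_Iic
    intro x hx
    simp [abs_of_nonpos (Set.mem_Iic.1 hx)]
  · refine (integrableOn_exp_neg_Ioi 0).congr_fun ?_ measurableSet_Ioi
    intro x hx
    simp [abs_of_pos (Set.mem_Ioi.1 hx)]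

lemma aux_E (t e L s : ℝ) (hLt : t = Real.exp L) :
    -(Real.exp (L * s))^2/(4*t) + e * Real.exp (L * s)
      = -(Real.exp (L * (s - 1/2)))^2/4 + (Real.sqrt t * e) * Real.exp (L * (s-1/2)) := by
  have hr : Real.sqrt t = Real.exp (L/2) := by
    rw [hLt, Real.exp_half]
  have hy : Real.exp (L * s) = Real.exp (L/2) * Real.exp (L * (s-1/2)) := by
    rw [← Real.exp_add]; congr 1; ring
  have ht : t = Real.exp (L/2) ^ 2 := by
    rw [hLt, ← Real.exp_nat_mul]; congr 1; push_cast; ring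
  rw [hr, hy, ht]
  have := Real.exp_pos (L/2)
  field_simp

lemma aux_E_le (w η : ℝ) (h : |η| ≤ 1/2) : -w^2/4 + η * w ≤ -w^2/8 + 1 := by
  have := abs_le.1 h
  nlinarith [sq_nonneg (w - 4 * η)]

theorem stmt11 (K₁ K₂ Δ : ℝ) (hK₁ : 0 < K₁) (hK : K₁ ≤ K₂)
    (ψ : ℝ → ℝ → ℝ)
    (hψmeas : ∀ t > 0, Measurable (ψ t))
    (hψbdd : ∀ t > 0, ∀ y ≥ 0, ψ t y ∈ Set.Icc K₁ K₂)
    (hψlim : ∀ y : ℝ → ℝ, Tendsto y atTop atTop →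
      Tendsto (fun t => ψ t (y t)) atTop (nhds (Real.exp Δ)))
    (A : ℝ) (hA : 0 < A)
    (φ : ℝ → ℝ) (hφmeas : Measurable φ) (hφbdd : ∃ C, ∀ y, |φ y| ≤ C)
    (hφasym : Tendsto (fun y => φ y / (A * y ^ (-1 : ℝ))) atTop (nhds 1))
    (ε : ℝ → ℝ) (hε : Tendsto (fun t => Real.sqrt t * ε t) atTop (nhds 0)) :
    Tendsto (fun t =>
        (∫ y in Set.Ioi (0:ℝ), φ y * Real.exp (-y^2/(4*t) + ε t * y) * ψ t y) /
        ((A/2) * Real.exp Δ * Real.log t))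
      atTop (nhds 1) := by
  have hK₂ : 0 < K₂ := hK₁.trans_le hK
  have hyφ : Tendsto (fun y => y * φ y) atTop (nhds A) := by
    have h := hφasym.const_mul A
    rw [mul_one] at h
    refine h.congr' ?_
    filter_upwards [eventually_gt_atTop 0] with y hy
    rw [Real.rpow_neg_one]
    field_simp
  obtain ⟨B, hB0, hB1, hB2⟩ : ∃ B : ℝ, 0 < B ∧ (∀ y > 0, |y * φ y| ≤ B) ∧
      ∀ y > 0, |y * φ y| ≤ B * y := by
    obtain ⟨C, hC⟩ := hφbdd
    have hC0 : 0 ≤ C := (abs_nonneg _).trans (hC 0)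
    have h1 := (hyφ.abs).eventually (gt_mem_nhds (show |A| < A + 1 by rw [abs_of_pos hA]; linarith))
    obtain ⟨M, hM⟩ := eventually_atTop.1 h1
    have hp : 0 ≤ C * |M| := by positivity
    refine ⟨A + 1 + C * |M| + C, by positivity, ?_, ?_⟩
    · intro y hy
      rcases le_total M y with h | h
      · have := hM y h
        linarith
      · rw [abs_mul, abs_of_pos hy]
        have : y * |φ y| ≤ |M| * C :=
          mul_le_mul (h.trans (le_abs_self _)) (hC y) (abs_nonneg _) (abs_nonneg _)
        linarith
    · intro y hy
      rw [abs_mul, abs_of_pos hy, mul_comm]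
      have := hC y
      gcongr
      linarith
  set G : ℝ → ℝ → ℝ := fun t s => Real.exp (Real.log t * s) * (φ (Real.exp (Real.log t * s)) *
    Real.exp (-(Real.exp (Real.log t * s))^2/(4*t) + ε t * Real.exp (Real.log t * s)) *
      ψ t (Real.exp (Real.log t * s))) with hG
  have hη : ∀ᶠ t in atTop, |Real.sqrt t * ε t| ≤ 1/2 := by
    have := (hε.abs).eventually (gt_mem_nhds (show |(0:ℝ)| < 1/2 by norm_num))
    filter_upwards [this] with t ht using ht.le
  have hL : ∀ᶠ t in atTop, 1 ≤ Real.log t := Real.tendsto_log_atTop.eventually_ge_atTop 1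
  -- basic bound
  have hbase : ∀ᶠ t in atTop, ∀ s, |G t s| ≤
      |Real.exp (Real.log t * s) * φ (Real.exp (Real.log t * s))| * K₂ *
        Real.exp (-(Real.exp (Real.log t * (s - 1/2)))^2/8 + 1) := by
    filter_upwards [hη, eventually_gt_atTop 0] with t h1 h3 s
    have hψ := hψbdd t h3 (Real.exp (Real.log t * s)) (Real.exp_pos _).le
    have hE := aux_E t (ε t) (Real.log t) s (Real.exp_log h3).symm
    have hE2 := aux_E_le (Real.exp (Real.log t * (s - 1/2))) _ h1
    have : G t s = (Real.exp (Real.log t * s) * φ (Real.exp (Real.log t * s))) *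
        ψ t (Real.exp (Real.log t * s)) *
        Real.exp (-(Real.exp (Real.log t * s))^2/(4*t) + ε t * Real.exp (Real.log t * s)) := by
      simp only [hG]; ring
    rw [this, abs_mul, abs_mul, Real.abs_exp, hE]
    have h4 : |ψ t (Real.exp (Real.log t * s))| ≤ K₂ := by
      rw [abs_of_pos (hK₁.trans_le hψ.1)]; exact hψ.2
    gcongr
  have hbound : ∀ᶠ t in atTop, ∀ᵐ s : ℝ, ‖G t s‖ ≤ B * K₂ * Real.exp 3 * Real.exp (-|s|) := by
    filter_upwards [hbase, hL] with t hb hl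
    refine Eventually.of_forall fun s => ?_
    rw [Real.norm_eq_abs]
    refine (hb s).trans ?_
    have hypos := Real.exp_pos (Real.log t * s)
    rcases le_total s 0 with hs | hs
    · have h1 := hB2 _ hypos
      have h2 : Real.exp (Real.log t * s) ≤ Real.exp (-|s|) := by
        apply Real.exp_le_exp.2
        rw [abs_of_nonpos hs]; nlinarith
      have h3 : Real.exp (-(Real.exp (Real.log t * (s - 1/2)))^2/8 + 1) ≤ Real.exp 3 := by
        apply Real.exp_le_exp.2
        nlinarith [sq_nonneg (Real.exp (Real.log t * (s - 1/2)))]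
      calc _ ≤ (B * Real.exp (-|s|)) * K₂ * Real.exp 3 := by
            gcongr
            exact h1.trans (by gcongr)
        _ = _ := by ring
    · have h1 := hB1 _ hypos
      have h3 : Real.exp (-(Real.exp (Real.log t * (s - 1/2)))^2/8 + 1)
          ≤ Real.exp 3 * Real.exp (-|s|) := by
        rw [← Real.exp_add]
        apply Real.exp_le_exp.2
        rw [abs_of_nonneg hs]
        rcases le_total s (1/2) with h | h
        · nlinarith [sq_nonneg (Real.exp (Real.log t * (s - 1/2)))]
        · have := Real.add_one_le_exp (Real.log t * (s - 1/2))
          nlinarith [sq_nonneg (Real.exp (Real.log t * (s - 1/2)) - 4)]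
      calc _ ≤ B * K₂ * (Real.exp 3 * Real.exp (-|s|)) := by gcongr
        _ = _ := by ring
  have hmeas : ∀ᶠ t in atTop, AEStronglyMeasurable (G t) volume := by
    filter_upwards [eventually_gt_atTop 0] with t ht
    have := hψmeas t ht
    apply Measurable.aestronglyMeasurable
    simp only [hG]
    fun_prop
  have hlim : ∀ᵐ s : ℝ, Tendsto (fun t => G t s) atTop
      (nhds ((Set.Ioc (0:ℝ) (1/2)).indicator (fun _ => A * Real.exp Δ) s)) := by
    have hne : ∀ c : ℝ, ∀ᵐ s : ℝ, s ≠ c := fun c => by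
      simp [ae_iff]
    filter_upwards [hne 0, hne (1/2)] with s hs0 hs1
    rcases lt_or_gt_of_ne hs0 with hs | hs
    · rw [Set.indicator_of_notMem (by simp only [Set.mem_Ioc, not_and_or]; left; linarith)]
      have hy : Tendsto (fun t => Real.exp (Real.log t * s)) atTop (nhds 0) :=
        Real.tendsto_exp_atBot.comp (Real.tendsto_log_atTop.atTop_mul_const_of_neg hs)
      have hy2 : Tendsto (fun t => B * Real.exp (Real.log t * s) * K₂ * Real.exp 1) atTop
          (nhds 0) := by
        simpa using ((hy.const_mul B).mul_const K₂).mul_const (Real.exp 1)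
      refine squeeze_zero_norm' ?_ hy2
      filter_upwards [hbase] with t hb
      refine (hb s).trans ?_
      have h1 := hB2 _ (Real.exp_pos (Real.log t * s))
      gcongr
      nlinarith [sq_nonneg (Real.exp (Real.log t * (s - 1/2)))]
    rcases lt_or_gt_of_ne hs1 with hs' | hs'
    · rw [Set.indicator_of_mem (show s ∈ Set.Ioc (0:ℝ) (1/2) from ⟨hs, hs'.le⟩)]
      have hy : Tendsto (fun t => Real.exp (Real.log t * s)) atTop atTop :=
        Real.tendsto_exp_atTop.comp (Real.tendsto_log_atTop.atTop_mul_const hs)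
      have hw : Tendsto (fun t => Real.exp (Real.log t * (s - 1/2))) atTop (nhds 0) :=
        Real.tendsto_exp_atBot.comp
          (Real.tendsto_log_atTop.atTop_mul_const_of_neg (by linarith))
      have hE : Tendsto (fun t => Real.exp (-(Real.exp (Real.log t * (s - 1/2)))^2/4
          + (Real.sqrt t * ε t) * Real.exp (Real.log t * (s-1/2)))) atTop (nhds 1) := by
        have := (Real.continuous_exp.tendsto _).comp
          ((((hw.pow 2).neg).div_const 4).add (hε.mul hw))
        simpa [Function.comp_def] using this
      have h := ((hyφ.comp hy).mul (hψlim _ hy)).mul hE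
      rw [mul_one] at h
      refine h.congr' ?_
      filter_upwards [eventually_gt_atTop 0] with t ht
      simp only [hG, Function.comp]
      rw [aux_E t (ε t) (Real.log t) s (Real.exp_log ht).symm]
      ring
    · rw [Set.indicator_of_notMem (by simp only [Set.mem_Ioc, not_and_or]; right; linarith)]
      have hw : Tendsto (fun t => Real.exp (Real.log t * (s - 1/2))) atTop atTop :=
        Real.tendsto_exp_atTop.comp
          (Real.tendsto_log_atTop.atTop_mul_const (by linarith))
      have hE : Tendsto (fun t => B * K₂ * (Real.exp 3 *
          Real.exp (-Real.exp (Real.log t * (s-1/2))))) atTop (nhds 0) := by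
        have := ((Real.tendsto_exp_neg_atTop_nhds_zero.comp hw).const_mul
          (Real.exp 3)).const_mul (B * K₂)
        simpa [Function.comp_def] using this
      refine squeeze_zero_norm' ?_ hE
      filter_upwards [hbase] with t hb
      refine (hb s).trans ?_
      have h1 := hB1 _ (Real.exp_pos (Real.log t * s))
      rw [← Real.exp_add]
      have h2 : -(Real.exp (Real.log t * (s - 1/2)))^2/8 + 1
          ≤ 3 + -Real.exp (Real.log t * (s-1/2)) := by
        nlinarith [sq_nonneg (Real.exp (Real.log t * (s - 1/2)) - 4)]
      have h3 := Real.exp_le_exp.2 h2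
      exact mul_le_mul (mul_le_mul_of_nonneg_right h1 hK₂.le) h3 (Real.exp_pos _).le
        (by positivity)
  have hDCT := tendsto_integral_filter_of_dominated_convergence _ hmeas hbound
    (aux_int.const_mul _) hlim
  have hval : ∫ s : ℝ, (Set.Ioc (0:ℝ) (1/2)).indicator (fun _ => A * Real.exp Δ) s
      = (A/2) * Real.exp Δ := by
    rw [integral_indicator measurableSet_Ioc]
    simp
    ring
  rw [hval] at hDCT
  have hc : (A/2) * Real.exp Δ ≠ 0 := by positivity
  have h := hDCT.div_const ((A/2) * Real.exp Δ)
  rw [div_self hc] at h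
  refine h.congr' ?_
  filter_upwards [hL] with t hl
  have hl0 : 0 < Real.log t := by linarith
  rw [aux_cov _ (Real.log t) hl0]
  rw [mul_comm (Real.log t), mul_div_mul_right _ _ hl0.ne']
end

section
/- Let (Ω, F, P) be a probability space. Let c₁, c₂ > 0, let G and, for each t > 0, G_t be nonnegative random variables satisfying P(G > z) ≤ c₁ e^{−c₂ z²} and P(G_t > z) ≤ c₁ e^{−c₂ z²} for all z ≥ 0 and all t. Let α, β > 0, let ε : (0,∞) → [0,∞) with ε_t → 0 as t → ∞, and for each t let A_t, B_t be random variables with |A_t| ≤ α G and |B_t| ≤ β ε_t G_t almost surely. Then for every integer n ≥ 0, the random variables e^{A_t + B_t} and e^{A_t} B_t^p (0 ≤ p ≤ n) are integrable for every t, and there exist C > 0 and t₀ > 0 such that for all t ≥ t₀: | E[e^{A_t + B_t}] − Σ_{p=0}^{n} (1/p!) E[e^{A_t} B_t^p] | ≤ C ε_t^{n+1}. -/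
open MeasureTheory Filter Real

lemma gt_moment {Ω : Type*} [MeasurableSpace Ω] (P : Measure Ω) [IsProbabilityMeasure P]
    (c₁ c₂ : ℝ) (hc₁ : 0 < c₁) (hc₂ : 0 < c₂) (l : ℝ) (hl : 0 ≤ l) :
    ∃ K : ℝ, 0 ≤ K ∧ ∀ X : Ω → ℝ, Measurable X → (∀ ω, 0 ≤ X ω) →
      (∀ z ≥ 0, P {ω | z < X ω} ≤ ENNReal.ofReal (c₁ * Real.exp (-c₂ * z^2))) →
      Integrable (fun ω => Real.exp (l * X ω)) P ∧ ∫ ω, Real.exp (l * X ω) ∂P ≤ K := by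
  set f : ℕ → ℝ := fun k => Real.exp (l * (k + 1)) * (c₁ * Real.exp (-c₂ * (k:ℝ)^2)) with hf
  have hfnn : ∀ k, 0 ≤ f k := fun k => by positivity
  have hsum : Summable f := by
    have h1 : Summable (fun k : ℕ => c₁ * Real.exp (l + (l+1)^2 / (4*c₂)) * Real.exp (-(k:ℝ))) :=
      (Real.summable_exp_neg_nat).mul_left _
    refine Summable.of_nonneg_of_le hfnn (fun k => ?_) h1
    have : f k = c₁ * Real.exp (l * (k + 1) + -c₂ * (k:ℝ)^2) := by
      rw [Real.exp_add]; simp only [hf]; ring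
    rw [this, mul_assoc, ← Real.exp_add]
    refine mul_le_mul_of_nonneg_left (Real.exp_le_exp.2 ?_) hc₁.le
    have : (l+1)^2 / (4*c₂) - (l+1) * k + c₂ * (k:ℝ)^2 = ((l+1) - 2 * c₂ * k)^2 / (4*c₂) := by
      field_simp; ring
    have h2 : 0 ≤ ((l+1) - 2 * c₂ * k)^2 / (4*c₂) := by positivity
    linarith
  refine ⟨1 + ∑' k, f k, add_nonneg zero_le_one (tsum_nonneg hfnn), fun X hX hX0 htail => ?_⟩
  have hmeas : Measurable (fun ω => Real.exp (l * X ω)) := by fun_prop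
  have hS : ∀ k : ℕ, MeasurableSet {ω | (k:ℝ) < X ω} := fun k => measurableSet_lt measurable_const hX
  have key : ∫⁻ ω, ENNReal.ofReal (Real.exp (l * X ω)) ∂P ≤ ENNReal.ofReal (1 + ∑' k, f k) := by
    calc ∫⁻ ω, ENNReal.ofReal (Real.exp (l * X ω)) ∂P 
        ≤ ∫⁻ ω, (1 + ∑' k : ℕ, {ω | (k:ℝ) < X ω}.indicator
            (fun _ => ENNReal.ofReal (Real.exp (l * (k + 1)))) ω) ∂P := by
          refine lintegral_mono fun ω => ?_
          rcases (hX0 ω).eq_or_lt with h | h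
          · simp [← h]
          · obtain ⟨k, hk⟩ : ∃ k : ℕ, (k:ℝ) < X ω ∧ X ω ≤ k + 1 := by
              have hpos : 0 < ⌈X ω⌉₊ := Nat.ceil_pos.2 h
              refine ⟨⌈X ω⌉₊ - 1, ?_, ?_⟩
              · apply Nat.lt_ceil.1; omega
              · have := Nat.le_ceil (X ω)
                have h3 : ((⌈X ω⌉₊ - 1 : ℕ) : ℝ) + 1 = (⌈X ω⌉₊ : ℝ) := by
                  exact_mod_cast Nat.sub_add_cancel hpos
                rw [h3]; exact this
            refine le_trans ?_ (le_add_of_nonneg_left zero_le_one)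
            refine le_trans ?_ (ENNReal.le_tsum k)
            rw [Set.indicator_of_mem (by exact hk.1)]
            apply ENNReal.ofReal_le_ofReal
            gcongr
            exact hk.2
      _ = 1 + ∑' k : ℕ, ENNReal.ofReal (Real.exp (l * (k + 1))) * P {ω | (k:ℝ) < X ω} := by
          rw [lintegral_add_left measurable_const, lintegral_tsum]
          · simp [lintegral_indicator_const (hS _)]
          · intro k; exact (measurable_const.indicator (hS k)).aemeasurable
      _ ≤ 1 + ∑' k : ℕ, ENNReal.ofReal (f k) := by
          gcongr with k
          simp only [hf]
          rw [ENNReal.ofReal_mul (by positivity)]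
          gcongr
          exact htail k (by positivity)
      _ = ENNReal.ofReal (1 + ∑' k, f k) := by
          rw [ENNReal.ofReal_add zero_le_one (tsum_nonneg hfnn), ENNReal.ofReal_tsum_of_nonneg hfnn hsum,
            ENNReal.ofReal_one]
  constructor
  · refine ⟨hmeas.aestronglyMeasurable, ?_⟩
    rw [hasFiniteIntegral_iff_ofReal (ae_of_all _ fun ω => (Real.exp_pos _).le)]
    exact key.trans_lt ENNReal.ofReal_lt_top
  · rw [integral_eq_lintegral_of_nonneg_ae (ae_of_all _ fun ω => (Real.exp_pos _).le)
      hmeas.aestronglyMeasurable]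
    exact ENNReal.toReal_le_of_le_ofReal (add_nonneg zero_le_one (tsum_nonneg hfnn)) key

lemma exp_add_le_two (x y : ℝ) : Real.exp (x + y) ≤ Real.exp (2 * x) + Real.exp (2 * y) := by
  have h1 := Real.exp_pos x
  have h2 := Real.exp_pos y
  rw [Real.exp_add, two_mul, two_mul, Real.exp_add, Real.exp_add]
  nlinarith [sq_nonneg (Real.exp x - Real.exp y)]

lemma pow_le_fact_exp (x : ℝ) (hx : 0 ≤ x) (p : ℕ) : x ^ p ≤ p.factorial * Real.exp x := by
  have := Real.pow_div_factorial_le_exp x hx p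
  rw [div_le_iff₀ (by positivity)] at this
  linarith

lemma exp_rem (b : ℝ) (n : ℕ) :
    |Real.exp b - ∑ p ∈ Finset.range n, b ^ p / p.factorial| ≤ |b| ^ n * Real.exp |b| := by
  have := Complex.norm_exp_sub_sum_le_norm_mul_exp (b : ℂ) n
  rw [Complex.norm_real, Real.norm_eq_abs] at this
  rw [← Real.norm_eq_abs, ← Complex.norm_real]
  push_cast
  exact this


theorem stmt13 {Ω : Type*} [MeasurableSpace Ω] (P : Measure Ω) [IsProbabilityMeasure P]
    (c₁ c₂ : ℝ) (hc₁ : 0 < c₁) (hc₂ : 0 < c₂)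
    (G : Ω → ℝ) (Gt : ℝ → Ω → ℝ)
    (hGmeas : Measurable G) (hGtmeas : ∀ t, Measurable (Gt t))
    (hGnn : ∀ ω, 0 ≤ G ω) (hGtnn : ∀ t ω, 0 ≤ Gt t ω)
    (hGtail : ∀ z ≥ 0, P {ω | z < G ω} ≤ ENNReal.ofReal (c₁ * Real.exp (-c₂ * z^2)))
    (hGttail : ∀ t, ∀ z ≥ 0,
      P {ω | z < Gt t ω} ≤ ENNReal.ofReal (c₁ * Real.exp (-c₂ * z^2)))
    (α β : ℝ) (hα : 0 < α) (hβ : 0 < β)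
    (ε : ℝ → ℝ) (hεnn : ∀ t, 0 ≤ ε t) (hεlim : Tendsto ε atTop (nhds 0))
    (A B : ℝ → Ω → ℝ) (hAmeas : ∀ t, Measurable (A t)) (hBmeas : ∀ t, Measurable (B t))
    (hA : ∀ t, ∀ᵐ ω ∂P, |A t ω| ≤ α * G ω)
    (hB : ∀ t, ∀ᵐ ω ∂P, |B t ω| ≤ β * ε t * Gt t ω)
    (n : ℕ) :
    (∀ t, Integrable (fun ω => Real.exp (A t ω + B t ω)) P ∧
      ∀ p ≤ n, Integrable (fun ω => Real.exp (A t ω) * B t ω ^ p) P) ∧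
    ∃ C > 0, ∃ t₀ > (0:ℝ), ∀ t ≥ t₀,
      |(∫ ω, Real.exp (A t ω + B t ω) ∂P) -
        ∑ p ∈ Finset.range (n + 1),
          (1 / (p.factorial : ℝ)) * ∫ ω, Real.exp (A t ω) * B t ω ^ p ∂P|
      ≤ C * ε t ^ (n + 1) := by

  have hint : ∀ t, ∀ m : ℝ, 0 ≤ m →
      Integrable (fun ω => Real.exp (2 * (α * G ω)) + Real.exp (2 * (m * Gt t ω))) P := by
    intro t m hm
    obtain ⟨_, _, h1⟩ := gt_moment P c₁ c₂ hc₁ hc₂ (2 * α) (by positivity)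
    obtain ⟨_, _, h2⟩ := gt_moment P c₁ c₂ hc₁ hc₂ (2 * m) (by positivity)
    simp only [← mul_assoc]
    exact (h1 G hGmeas hGnn hGtail).1.add (h2 _ (hGtmeas t) (hGtnn t) (hGttail t)).1
  have hI1 : ∀ t, Integrable (fun ω => Real.exp (A t ω + B t ω)) P := by
    intro t
    refine (hint t (β * ε t) (mul_nonneg hβ.le (hεnn t))).mono'
      ((hAmeas t).add (hBmeas t)).exp.aestronglyMeasurable ?_
    filter_upwards [hA t, hB t] with ω h1 h2
    rw [Real.norm_eq_abs, Real.abs_exp]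
    refine le_trans ?_ (exp_add_le_two _ _)
    gcongr
    · exact (le_abs_self _).trans h1
    · exact (le_abs_self _).trans h2
  have hI2 : ∀ t p, Integrable (fun ω => Real.exp (A t ω) * B t ω ^ p) P := by
    intro t p
    refine ((hint t (β * ε t) (mul_nonneg hβ.le (hεnn t))).const_mul (p.factorial : ℝ)).mono'
      ((hAmeas t).exp.mul ((hBmeas t).pow_const p)).aestronglyMeasurable ?_
    filter_upwards [hA t, hB t] with ω h1 h2
    rw [Real.norm_eq_abs, abs_mul, Real.abs_exp, abs_pow]
    calc Real.exp (A t ω) * |B t ω| ^ p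
        ≤ Real.exp (α * G ω) * (p.factorial * Real.exp (β * ε t * Gt t ω)) := by
          gcongr
          · exact (le_abs_self _).trans h1
          · refine (pow_le_fact_exp _ (abs_nonneg _) p).trans ?_
            gcongr
      _ = p.factorial * Real.exp (α * G ω + β * ε t * Gt t ω) := by rw [Real.exp_add]; ring
      _ ≤ _ := by
          gcongr
          exact exp_add_le_two _ _
  refine ⟨fun t => ⟨hI1 t, fun p _ => hI2 t p⟩, ?_⟩
  obtain ⟨K1, hK1, h1⟩ := gt_moment P c₁ c₂ hc₁ hc₂ (2 * α) (by positivity)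
  obtain ⟨K2, hK2, h2⟩ := gt_moment P c₁ c₂ hc₁ hc₂ (2 * (1 + β)) (by positivity)
  obtain ⟨t1, ht1⟩ := eventually_atTop.1 (hεlim.eventually_le_const zero_lt_one)
  refine ⟨β ^ (n+1) * (n+1).factorial * (K1 + K2 + 1), by positivity, max t1 1, by positivity,
    fun t ht => ?_⟩
  have hε1 : ε t ≤ 1 := ht1 t ((le_max_left _ _).trans ht)
  have hε0 := hεnn t
  have heq : (∫ ω, Real.exp (A t ω + B t ω) ∂P) -
        ∑ p ∈ Finset.range (n + 1),
          (1 / (p.factorial : ℝ)) * ∫ ω, Real.exp (A t ω) * B t ω ^ p ∂P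
      = ∫ ω, (Real.exp (A t ω + B t ω) - ∑ p ∈ Finset.range (n + 1),
          (1 / (p.factorial : ℝ)) * (Real.exp (A t ω) * B t ω ^ p)) ∂P := by
    rw [integral_sub (hI1 t) (integrable_finsetSum _ fun p _ => (hI2 t p).const_mul _),
      integral_finsetSum _ fun p _ => (hI2 t p).const_mul _]
    simp only [integral_const_mul]
  rw [heq, ← Real.norm_eq_abs]
  have hb : ∀ᵐ ω ∂P, ‖Real.exp (A t ω + B t ω) - ∑ p ∈ Finset.range (n + 1),
          (1 / (p.factorial : ℝ)) * (Real.exp (A t ω) * B t ω ^ p)‖ ≤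
      (β * ε t) ^ (n+1) * (n+1).factorial *
        (Real.exp (2 * (α * G ω)) + Real.exp (2 * ((1 + β) * Gt t ω))) := by
    filter_upwards [hA t, hB t] with ω h3 h4
    have h0 := hGtnn t ω
    have e1 : Real.exp (A t ω + B t ω) - ∑ p ∈ Finset.range (n + 1),
          (1 / (p.factorial : ℝ)) * (Real.exp (A t ω) * B t ω ^ p)
        = Real.exp (A t ω) * (Real.exp (B t ω) -
            ∑ p ∈ Finset.range (n + 1), B t ω ^ p / p.factorial) := by
      rw [Real.exp_add, mul_sub, Finset.mul_sum]
      congr 1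
      exact Finset.sum_congr rfl fun p _ => by ring
    rw [e1, Real.norm_eq_abs, abs_mul, Real.abs_exp]
    have h5 : |B t ω| ≤ β * Gt t ω := h4.trans (by
      gcongr
      exact mul_le_of_le_one_right hβ.le hε1)
    calc _ ≤ Real.exp (α * G ω) * ((β * ε t * Gt t ω) ^ (n+1) * Real.exp (β * Gt t ω)) := by
          gcongr
          · exact (le_abs_self _).trans h3
          · refine (exp_rem _ _).trans ?_
            gcongr
      _ = Real.exp (α * G ω) * ((β * ε t) ^ (n+1) * (Gt t ω) ^ (n+1) * Real.exp (β * Gt t ω)) := by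
          rw [mul_pow (β * ε t)]
      _ ≤ Real.exp (α * G ω) * ((β * ε t) ^ (n+1) * ((n+1).factorial * Real.exp (Gt t ω)) *
            Real.exp (β * Gt t ω)) := by
          gcongr
          exact pow_le_fact_exp _ h0 _
      _ = (β * ε t) ^ (n+1) * (n+1).factorial * Real.exp (α * G ω + (1 + β) * Gt t ω) := by
          rw [add_mul, one_mul, Real.exp_add, Real.exp_add]; ring
      _ ≤ _ := by
          gcongr
          exact exp_add_le_two _ _
  refine (norm_integral_le_of_norm_le ((hint t (1+β) (by positivity)).const_mul _) hb).trans ?_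
  rw [integral_const_mul]
  obtain ⟨i1, b1⟩ := h1 G hGmeas hGnn hGtail
  obtain ⟨i2, b2⟩ := h2 _ (hGtmeas t) (hGtnn t) (hGttail t)
  simp only [← mul_assoc]
  rw [integral_add i1 i2]
  calc _ ≤ (β * ε t) ^ (n+1) * (n+1).factorial * (K1 + K2 + 1) := by
        gcongr ?_ * ?_
        linarith
    _ = _ := by rw [mul_pow]; ring
end

section
/- Let (B_s)_{s≥0} be a one-dimensional Brownian motion on a probability space: an almost surely continuous process with B_0 = 0 and independent increments, B_t − B_s being a centered Gaussian of variance 2(t−s) for 0 ≤ s ≤ t (normalization E[B_t²] = 2t). Then for every ε > 0, the random variable G := sup_{s>0} |B_s| / max(s^{1/2−ε}, s^{1/2+ε}) has Gaussian tails: there exist constants c₁, c₂ > 0 such that P(G > z) ≤ c₁ e^{−c₂ z²} for all z ≥ 0. -/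
open MeasureTheory ProbabilityTheory Filter Real Set Asymptotics

/-- A one-dimensional Brownian motion with normalization `E[B_t^2] = 2t`. -/
structure IsBrownianMotion {Ω : Type*} [MeasurableSpace Ω] (P : Measure Ω)
    (B : ℝ → Ω → ℝ) : Prop where
  cont : ∀ᵐ ω ∂P, Continuous fun s => B s ω
  init : ∀ᵐ ω ∂P, B 0 ω = 0
  meas : ∀ s, Measurable (B s)
  indep : ∀ (n : ℕ) (t : ℕ → ℝ), Monotone t →
    iIndepFun
      (fun i : Fin n => fun ω => B (t ((i : ℕ) + 1)) ω - B (t (i : ℕ)) ω) P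
  gauss : ∀ s t : ℝ, 0 ≤ s → s ≤ t →
    Measure.map (fun ω => B t ω - B s ω) P = gaussianReal 0 ((2 * (t - s)).toNNReal)

/-- Feynman–Kac representation of the solution of the linearised FKPP equation
`∂_t h = ∂_x² h + h` for `x > m t`, with absorbing boundary `h (m t) t = 0` and
initial condition `h₀`:
`h(x,t) = e^t E[h₀(x + B_t) 1{x + B_s > m(t-s) ∀ s ∈ [0,t]}]`. -/
noncomputable def fkppSol {Ω : Type*} [MeasurableSpace Ω] (P : Measure Ω)
    (B : ℝ → Ω → ℝ) (h₀ m : ℝ → ℝ) (x t : ℝ) : ℝ :=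
  Real.exp t *
    ∫ ω, ({ω : Ω | ∀ s ∈ Icc (0:ℝ) t, m (t - s) < x + B s ω}.indicator
      (fun ω => h₀ (x + B t ω)) ω) ∂P

lemma bm_tail {Ω : Type*} [MeasurableSpace Ω] (P : Measure Ω) [IsProbabilityMeasure P]
    (B : ℝ → Ω → ℝ) (hB : IsBrownianMotion P B) (s t x : ℝ) (hs : 0 ≤ s) (hst : s ≤ t)
    (hx : 0 ≤ x) :
    P {ω | x < |B t ω - B s ω|} ≤ ENNReal.ofReal (2 * Real.exp (-x ^ 2 / (4 * (t - s)))) := by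
  have hg := hB.gauss s t hs hst
  have hm : Measurable (fun ω => B t ω - B s ω) := (hB.meas t).sub (hB.meas s)
  have hsub : HasSubgaussianMGF (fun ω => B t ω - B s ω) ((2 * (t - s)).toNNReal) P := by
    constructor
    · intro u
      have := integrable_exp_mul_gaussianReal (μ := 0) (v := (2 * (t - s)).toNNReal) u
      rw [← hg] at this
      exact this.comp_measurable hm
    · intro u
      rw [mgf_gaussianReal hg u]
      simp
  have h1 := hsub.measure_ge_le hx
  have h2 := hsub.neg.measure_ge_le hx
  have hc : (((2 * (t - s)).toNNReal : NNReal) : ℝ) = 2 * (t - s) :=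
    Real.coe_toNNReal _ (by linarith)
  rw [hc] at h1 h2
  rw [show 2 * (2 * (t - s)) = 4 * (t - s) by ring] at h1 h2
  have hle : P.real {ω | x < |B t ω - B s ω|} ≤ 2 * Real.exp (-x ^ 2 / (4 * (t - s))) := by
    calc P.real {ω | x < |B t ω - B s ω|}
        ≤ P.real ({ω | x ≤ B t ω - B s ω} ∪ {ω | x ≤ (-fun ω => B t ω - B s ω) ω}) := by
          apply measureReal_mono
          · intro ω hω
            have hlt : x < |B t ω - B s ω| := hω
            rcases lt_abs.1 hlt with h | h
            · exact Or.inl h.le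
            · exact Or.inr h.le
          · exact measure_ne_top _ _
      _ ≤ _ := measureReal_union_le _ _
      _ ≤ _ := by linarith
  rw [← ofReal_measureReal]
  exact ENNReal.ofReal_le_ofReal hle

lemma dyadic_bound (f : ℝ → ℝ) (h0 : f 0 = 0) (T : ℝ) (a : ℕ → ℝ) (ha : ∀ n, 0 ≤ a n)
    (h : ∀ n : ℕ, ∀ k : ℕ, k < 2 ^ n →
      |f (((k : ℝ) + 1) * (T / 2 ^ n)) - f ((k : ℝ) * (T / 2 ^ n))| ≤ a n) (n : ℕ) :
    ∀ k : ℕ, k ≤ 2 ^ n → |f ((k : ℝ) * (T / 2 ^ n))| ≤ ∑ i ∈ Finset.range (n + 1), a i := by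
  induction n with
  | zero =>
    intro k hk
    have := h 0 0 (by norm_num)
    have hk' : k = 0 ∨ k = 1 := by
      simp only [pow_zero] at hk
      omega
    rcases hk' with rfl | rfl
    · simpa [h0] using ha 0
    · simpa [h0] using this
  | succ n ih =>
    intro k hk
    rw [Finset.sum_range_succ]
    have key : ∀ j : ℕ, ((2 * j : ℕ) : ℝ) * (T / 2 ^ (n + 1)) = (j : ℝ) * (T / 2 ^ n) := by
      intro j
      push_cast
      rw [pow_succ]
      field_simp
    rcases Nat.even_or_odd' k with ⟨j, rfl | rfl⟩
    · rw [key]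
      have := ih j (by rw [pow_succ] at hk; omega)
      linarith [ha (n + 1)]
    · have h1 := ih j (by rw [pow_succ] at hk; omega)
      have h2 := h (n + 1) (2 * j) (by omega)
      rw [key] at h2
      have e : ((2 * j + 1 : ℕ) : ℝ) = ((2 * j : ℕ) : ℝ) + 1 := by push_cast; ring
      rw [e]
      set u := f ((((2 * j : ℕ) : ℝ) + 1) * (T / 2 ^ (n + 1)))
      set v := f ((j : ℝ) * (T / 2 ^ n))
      have : |u| ≤ |u - v| + |v| := by simpa using abs_add_le (u - v) v
      linarith

lemma chain_bound (f : ℝ → ℝ) (hf : Continuous f) (h0 : f 0 = 0) (T : ℝ) (hT : 0 < T)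
    (a : ℕ → ℝ) (ha : ∀ n, 0 ≤ a n) (hs : Summable a)
    (h : ∀ n : ℕ, ∀ k : ℕ, k < 2 ^ n →
      |f (((k : ℝ) + 1) * (T / 2 ^ n)) - f ((k : ℝ) * (T / 2 ^ n))| ≤ a n)
    (s : ℝ) (hs0 : 0 ≤ s) (hsT : s ≤ T) : |f s| ≤ ∑' n, a n := by
  have hlim : Tendsto (fun n : ℕ => (⌊(s / T) * 2 ^ n⌋₊ : ℝ) * (T / 2 ^ n)) atTop (nhds s) := by
    have h1 := (tendsto_nat_floor_mul_div_atTop (R := ℝ) (a := s / T) (by positivity)).comp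
      (tendsto_pow_atTop_atTop_of_one_lt (r := (2:ℝ)) (by norm_num))
    have h2 := h1.mul_const T
    rw [div_mul_cancel₀ _ hT.ne'] at h2
    refine h2.congr fun n => ?_
    simp only [Function.comp]
    ring
  have hl := ((hf.tendsto s).comp hlim).abs
  refine le_of_tendsto hl (Eventually.of_forall fun n => ?_)
  refine (dyadic_bound f h0 T a ha h n _ ?_).trans (hs.sum_le_tsum _ fun i _ => ha i)
  apply Nat.floor_le_of_le
  push_cast
  have : s / T ≤ 1 := (div_le_one hT).2 hsT
  nlinarith [show (0:ℝ) < 2 ^ n by positivity]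

lemma bm_max {Ω : Type*} [MeasurableSpace Ω] (P : Measure Ω) [IsProbabilityMeasure P]
    (B : ℝ → Ω → ℝ) (hB : IsBrownianMotion P B) :
    ∃ V > 0, ∃ C > 0, ∀ T > (0:ℝ), ∀ l ≥ (0:ℝ),
      P {ω | ∃ s, 0 ≤ s ∧ s ≤ T ∧ V * l * √T < |B s ω|} ≤
        ENNReal.ofReal (C * Real.exp (-l ^ 2)) := by
  set r : ℝ := √(1/2) with hr
  have hr2 : r ^ 2 = 1 / 2 := Real.sq_sqrt (by norm_num)
  have hr0 : 0 < r := by positivity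
  have hr1 : r < 1 := by nlinarith
  have hsum : Summable (fun n : ℕ => 2 * (1 + (n:ℝ)) * r ^ n) := by
    have h1 := summable_pow_mul_geometric_of_norm_lt_one (R := ℝ) 1 (r := r)
      (by rw [Real.norm_of_nonneg hr0.le]; exact hr1)
    have h2 := summable_geometric_of_lt_one hr0.le hr1
    refine ((h1.add h2).mul_left 2).congr fun n => ?_
    ring
  set q : ℝ := 2 * Real.exp (-2) with hq
  have hq0 : 0 < q := by positivity
  have hq1 : q < 1 := by
    have h3 : (3:ℝ) ≤ Real.exp 2 := by linarith [Real.add_one_le_exp (2:ℝ)]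
    rw [hq, Real.exp_neg, ← div_eq_mul_inv, div_lt_one (by positivity)]
    linarith
  have hqs := summable_geometric_of_lt_one hq0.le hq1
  refine ⟨∑' n : ℕ, 2 * (1 + (n:ℝ)) * r ^ n, hsum.tsum_pos (fun n => by positivity) 0 (by simp),
    max (2 * ∑' n : ℕ, q ^ n) (Real.exp 1), by positivity, ?_⟩
  intro T hT l hl
  rcases lt_or_ge l 1 with hl1 | hl1
  · refine prob_le_one.trans ?_
    rw [← ENNReal.ofReal_one]
    apply ENNReal.ofReal_le_ofReal
    calc (1:ℝ) ≤ Real.exp 1 * Real.exp (-l ^ 2) := by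
          rw [← Real.exp_add]
          apply Real.one_le_exp
          nlinarith
      _ ≤ _ := by gcongr; exact le_max_right _ _
  set a : ℕ → ℝ := fun n => (l * √T) * (2 * (1 + (n:ℝ)) * r ^ n) with ha
  have ha0 : ∀ n, 0 ≤ a n := fun n => by positivity
  have hasum : Summable a := hsum.mul_left _
  have hincl : P {ω | ∃ s, 0 ≤ s ∧ s ≤ T ∧
      (∑' n : ℕ, 2 * (1 + (n:ℝ)) * r ^ n) * l * √T < |B s ω|} ≤
      P (⋃ n : ℕ, ⋃ k ∈ Finset.range (2 ^ n),
        {ω | a n < |B (((k : ℝ) + 1) * (T / 2 ^ n)) ω - B ((k : ℝ) * (T / 2 ^ n)) ω|}) := by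
    apply measure_mono_ae
    filter_upwards [hB.cont, hB.init] with ω hc h0 hω
    obtain ⟨s, hs0, hsT, hs⟩ := hω
    by_contra hcon
    have hcon' : ∀ n : ℕ, ∀ k : ℕ, k < 2 ^ n →
      |B (((k : ℝ) + 1) * (T / 2 ^ n)) ω - B ((k : ℝ) * (T / 2 ^ n)) ω| ≤ a n := by
      intro n k hk
      by_contra hlt
      apply hcon
      refine Set.mem_iUnion.2 ⟨n, Set.mem_iUnion₂.2 ⟨k, Finset.mem_range.2 hk, ?_⟩⟩
      exact not_le.1 hlt
    have := chain_bound (fun s => B s ω) hc h0 T hT a ha0 hasum hcon' s hs0 hsT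
    rw [ha, tsum_mul_left] at this
    apply absurd hs
    rw [not_lt]
    linarith
  refine hincl.trans ((measure_iUnion_le _).trans ?_)
  have hn : ∀ n : ℕ, P (⋃ k ∈ Finset.range (2 ^ n),
        {ω | a n < |B (((k : ℝ) + 1) * (T / 2 ^ n)) ω - B ((k : ℝ) * (T / 2 ^ n)) ω|}) ≤
      ENNReal.ofReal (2 * Real.exp (-l ^ 2) * q ^ n) := by
    intro n
    refine (measure_biUnion_finset_le _ _).trans ?_
    have hk : ∀ k ∈ Finset.range (2 ^ n),
        P {ω | a n < |B (((k : ℝ) + 1) * (T / 2 ^ n)) ω - B ((k : ℝ) * (T / 2 ^ n)) ω|} ≤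
        ENNReal.ofReal (2 * Real.exp (-l ^ 2) * Real.exp (-2) ^ n) := by
      intro k _
      have hTn : 0 < T / 2 ^ n := by positivity
      refine (bm_tail P B hB _ _ (a n) (by positivity) (by nlinarith) (ha0 n)).trans ?_
      apply ENNReal.ofReal_le_ofReal
      rw [mul_assoc, ← Real.exp_nat_mul, ← Real.exp_add]
      gcongr
      have e1 : (a n) ^ 2 = l ^ 2 * (1 + (n:ℝ)) ^ 2 * (4 * (T / 2 ^ n)) := by
        simp only [ha]
        rw [mul_pow, mul_pow, mul_pow, Real.sq_sqrt hT.le, ← pow_mul, mul_comm n 2, pow_mul, hr2]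
        rw [one_div, inv_pow]
        ring
      have e2 : ((k : ℝ) + 1) * (T / 2 ^ n) - (k : ℝ) * (T / 2 ^ n) = T / 2 ^ n := by ring
      rw [e2, e1, neg_div, mul_div_cancel_right₀ _ (by positivity)]
      have hl2 : 1 ≤ l ^ 2 := by nlinarith
      have hn0 : (0:ℝ) ≤ n := by positivity
      nlinarith [mul_nonneg (sub_nonneg.2 hl2) hn0, mul_nonneg (sq_nonneg l) (sq_nonneg (n:ℝ))]
    refine (Finset.sum_le_sum hk).trans ?_
    rw [Finset.sum_const, Finset.card_range, nsmul_eq_mul, ← ENNReal.ofReal_natCast,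
      ← ENNReal.ofReal_mul (by positivity)]
    apply le_of_eq
    congr 1
    rw [hq, mul_pow]
    push_cast
    ring
  refine (ENNReal.tsum_le_tsum hn).trans ?_
  rw [← ENNReal.ofReal_tsum_of_nonneg (fun n => by positivity) (hqs.mul_left _), tsum_mul_left]
  apply ENNReal.ofReal_le_ofReal
  rw [mul_right_comm]
  gcongr
  exact le_max_left _ _

lemma summable_int_exp (d : ℝ) (hd : 0 < d) : Summable (fun m : ℤ => Real.exp (-d * |(m:ℝ)|)) := by
  have h : Summable (fun n : ℕ => Real.exp (-d) ^ n) :=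
    summable_geometric_of_lt_one (Real.exp_pos _).le (by rw [Real.exp_lt_one_iff]; linarith)
  apply Summable.of_nat_of_neg
  · refine h.congr fun n => ?_
    rw [← Real.exp_nat_mul]
    simp [mul_comm]
  · refine h.congr fun n => ?_
    rw [← Real.exp_nat_mul]
    simp [mul_comm]

theorem stmt16 {Ω : Type*} [MeasurableSpace Ω] (P : Measure Ω) [IsProbabilityMeasure P]
    (B : ℝ → Ω → ℝ) (hB : IsBrownianMotion P B)
    (ε : ℝ) (hε : 0 < ε) :
    ∃ c₁ > 0, ∃ c₂ > 0, ∀ z ≥ (0:ℝ),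
      P {ω | ∃ s > (0:ℝ),
          z * max (s ^ ((1:ℝ)/2 - ε)) (s ^ ((1:ℝ)/2 + ε)) < |B s ω|} ≤
        ENNReal.ofReal (c₁ * Real.exp (-c₂ * z ^ 2)) := by
  obtain ⟨V, hV, C, hC, hmax⟩ := bm_max P B hB
  set κ : ℝ := Real.exp (-(1/2) - ε) / V with hκ
  have hκ0 : 0 < κ := by positivity
  set c : ℝ := κ ^ 2 with hc
  have hc0 : 0 < c := by positivity
  have hS := summable_int_exp (2 * c * ε) (by positivity)
  refine ⟨max (C * ∑' m : ℤ, Real.exp (-(2 * c * ε) * |(m:ℝ)|)) (Real.exp c), by positivity,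
    c, hc0, ?_⟩
  intro z hz
  rcases lt_or_ge z 1 with hz1 | hz1
  · refine prob_le_one.trans ?_
    rw [← ENNReal.ofReal_one]
    apply ENNReal.ofReal_le_ofReal
    calc (1:ℝ) ≤ Real.exp c * Real.exp (-c * z ^ 2) := by
          rw [← Real.exp_add]
          apply Real.one_le_exp
          nlinarith [mul_nonneg hc0.le (show 0 ≤ 1 - z ^ 2 by nlinarith)]
      _ ≤ _ := by gcongr; exact le_max_right _ _
  have hincl : {ω | ∃ s > (0:ℝ),
          z * max (s ^ ((1:ℝ)/2 - ε)) (s ^ ((1:ℝ)/2 + ε)) < |B s ω|} ⊆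
      ⋃ m : ℤ, {ω | ∃ s, 0 ≤ s ∧ s ≤ Real.exp (m + 1) ∧
        V * (z * κ * Real.exp (ε * |(m:ℝ)|)) * √(Real.exp (m + 1)) < |B s ω|} := by
    rintro ω ⟨s, hs, hlt⟩
    set x := Real.log s with hx
    have hsx : s = Real.exp x := (Real.exp_log hs).symm
    refine Set.mem_iUnion.2 ⟨⌊x⌋, s, hs.le, ?_, lt_of_le_of_lt ?_ hlt⟩
    · rw [hsx]
      exact Real.exp_le_exp.2 (Int.lt_floor_add_one x).le
    · have h1 : (⌊x⌋ : ℝ) ≤ x := Int.floor_le x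
      have h2 := Int.lt_floor_add_one x
      generalize (⌊x⌋ : ℝ) = m at h1 h2
      have e : V * (z * κ * Real.exp (ε * |m|)) * √(Real.exp (m + 1)) =
          z * Real.exp (ε * |m| - ε + m / 2) := by
        rw [← Real.exp_half, hκ]
        rw [show ε * |m| - ε + m / 2 = (-(1/2) - ε) + ε * |m| + (m + 1) / 2 by ring,
          Real.exp_add, Real.exp_add]
        field_simp
      rw [e]
      gcongr
      rw [hsx, ← Real.exp_mul, ← Real.exp_mul]
      rcases abs_cases m with ⟨h3, _⟩ | ⟨h3, _⟩
      · refine le_max_of_le_right (Real.exp_le_exp.2 ?_)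
        rw [h3]
        nlinarith
      · refine le_max_of_le_left (Real.exp_le_exp.2 ?_)
        rw [h3]
        nlinarith
  refine (measure_mono hincl).trans ((measure_iUnion_le _).trans ?_)
  have hm : ∀ m : ℤ, P {ω | ∃ s, 0 ≤ s ∧ s ≤ Real.exp (m + 1) ∧
        V * (z * κ * Real.exp (ε * |(m:ℝ)|)) * √(Real.exp (m + 1)) < |B s ω|} ≤
      ENNReal.ofReal (C * Real.exp (-c * z ^ 2) * Real.exp (-(2 * c * ε) * |(m:ℝ)|)) := by
    intro m
    refine (hmax _ (Real.exp_pos _) (z * κ * Real.exp (ε * |(m:ℝ)|)) (by positivity)).trans ?_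
    apply ENNReal.ofReal_le_ofReal
    rw [mul_assoc C, ← Real.exp_add]
    gcongr
    rw [mul_pow, mul_pow, ← hc, ← Real.exp_nat_mul]
    have h1 := Real.add_one_le_exp ((2:ℕ) * (ε * |(m:ℝ)|))
    push_cast at h1 ⊢
    have hz2 : 1 ≤ z ^ 2 := by nlinarith
    have hw : 0 ≤ ε * |(m:ℝ)| := by positivity
    have h4 : z ^ 2 * c * (2 * (ε * |(m:ℝ)|) + 1) ≤ z ^ 2 * c * Real.exp (2 * (ε * |(m:ℝ)|)) := by
      gcongr
    nlinarith [mul_nonneg (mul_nonneg hc0.le hw) (sub_nonneg.2 hz2)]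
  refine (ENNReal.tsum_le_tsum hm).trans ?_
  rw [← ENNReal.ofReal_tsum_of_nonneg (fun n => by positivity) (hS.mul_left _), tsum_mul_left]
  apply ENNReal.ofReal_le_ofReal
  rw [mul_right_comm]
  gcongr
  exact le_max_left _ _
end

section
/- Let (B_s)_{s≥0} be a one-dimensional Brownian motion on a probability space: an almost surely continuous process with B_0 = 0 and independent increments, B_t − B_s being a centered Gaussian of variance 2(t−s) for 0 ≤ s ≤ t (normalization E[B_t²] = 2t). Let m : [0,∞) → ℝ be twice continuously differentiable with m''(s) = O(1/s²) as s → ∞. Then: (i) the limit v := lim_{s→∞} m'(s) exists in ℝ; (ii) Δ := (1/4) ∫₀^∞ (m'(s) − v)² ds is finite; (iii) almost surely the integral X := (1/2) ∫₀^∞ m''(s) B_s ds converges absolutely; and (iv) E[e^X] = e^Δ. -/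
open MeasureTheory ProbabilityTheory Filter Real Set Asymptotics

namespace Aux17

/-- grid point -/
noncomputable def grid (n : ℕ) (k : ℕ) : ℝ := (k : ℝ) / ((n : ℝ) + 1)

lemma grid_lt_iff (n k : ℕ) (s : ℝ) : grid n k < s ↔ k < ⌈s * ((n:ℝ)+1)⌉₊ := by
  have : (0:ℝ) < (n:ℝ)+1 := by positivity
  rw [Nat.lt_ceil, grid, div_lt_iff₀ this]

lemma le_grid_iff (n k : ℕ) (s : ℝ) : s ≤ grid n k ↔ ⌈s * ((n:ℝ)+1)⌉₊ ≤ k := by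
  rw [← not_lt, grid_lt_iff, not_lt]

lemma grid_nonneg (n k : ℕ) : 0 ≤ grid n k := by unfold grid; positivity

lemma grid_mono (n : ℕ) : Monotone (grid n) := by
  intro a b h
  unfold grid
  gcongr

lemma grid_succ (n k : ℕ) : grid n (k+1) = grid n k + 1/((n:ℝ)+1) := by
  unfold grid; push_cast; ring

lemma step_tendsto : Tendsto (fun n : ℕ => 1/((n:ℝ)+1)) atTop (nhds 0) :=
  tendsto_one_div_add_atTop_nhds_zero_nat

lemma step_le (n : ℕ) : 1/((n:ℝ)+1) ≤ 1 := by
  rw [div_le_one (by positivity)]; linarith [(Nat.cast_nonneg n : (0:ℝ) ≤ n)]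

lemma grid_ceil_tendsto (s : ℝ) (hs : 0 < s) :
    Tendsto (fun n : ℕ => grid n ⌈s * ((n:ℝ)+1)⌉₊) atTop (nhds s) := by
  have h1 : ∀ n : ℕ, s ≤ grid n ⌈s * ((n:ℝ)+1)⌉₊ := fun n => (le_grid_iff n _ s).2 le_rfl
  have h2 : ∀ n : ℕ, grid n ⌈s * ((n:ℝ)+1)⌉₊ ≤ s + 1/((n:ℝ)+1) := by
    intro n
    have : (0:ℝ) < (n:ℝ)+1 := by positivity
    unfold grid
    rw [div_le_iff₀ this]
    have := (Nat.ceil_lt_add_one (a := s * ((n:ℝ)+1)) (by positivity)).le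
    field_simp
    linarith
  refine tendsto_of_tendsto_of_tendsto_of_le_of_le tendsto_const_nhds ?_ h1 h2
  simpa using tendsto_const_nhds.add step_tendsto

lemma ceil_le_sq (s : ℝ) : ∀ᶠ n : ℕ in atTop, ⌈s * ((n:ℝ)+1)⌉₊ ≤ (n+1)^2 := by
  obtain ⟨M, hM⟩ := exists_nat_ge s
  filter_upwards [eventually_ge_atTop M] with n hn
  rw [Nat.ceil_le]
  have : (M:ℝ) ≤ n := by exact_mod_cast hn
  push_cast
  nlinarith

lemma ceil_bounds (n : ℕ) (s : ℝ) (hs : 0 < s) :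
    ∃ k, ⌈s * ((n:ℝ)+1)⌉₊ = k + 1 ∧ grid n k < s ∧ s ≤ grid n (k+1) := by
  have h : 0 < ⌈s * ((n:ℝ)+1)⌉₊ := Nat.ceil_pos.2 (by positivity)
  obtain ⟨k, hk⟩ := Nat.exists_eq_succ_of_ne_zero h.ne'
  refine ⟨k, hk, ?_, ?_⟩
  · rw [grid_lt_iff]; omega
  · rw [le_grid_iff]; omega

/-- Riemann sums on the half line. -/
lemma riemann (f : ℝ → ℝ) (hf : Continuous f) (C : ℝ)
    (hC : ∀ s, 0 ≤ s → |f s| ≤ C / (1 + s)) :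
    Tendsto (fun n : ℕ => ∑ k ∈ Finset.range ((n+1)^2), (f (grid n k))^2 * (1/((n:ℝ)+1)))
      atTop (nhds (∫ s in Ioi (0:ℝ), (f s)^2)) := by
  have hC0 : 0 ≤ C := by simpa using (abs_nonneg _).trans (hC 0 le_rfl)
  let φ : ℕ → ℝ → ℝ := fun n s => ∑ k ∈ Finset.range ((n+1)^2),
    (Ioc (grid n k) (grid n (k+1))).indicator (fun _ => (f (grid n k))^2) s
  have hφ : ∀ (n : ℕ) (s : ℝ), 0 < s → ∀ k, ⌈s * ((n:ℝ)+1)⌉₊ = k + 1 →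
      φ n s = if k < (n+1)^2 then (f (grid n k))^2 else 0 := by
    intro n s hs k hk
    have : ∀ j, (Ioc (grid n j) (grid n (j+1))).indicator (fun _ => (f (grid n j))^2) s
        = if k = j then (f (grid n j))^2 else 0 := by
      intro j
      rw [indicator_apply]
      congr 1
      rw [mem_Ioc, grid_lt_iff, le_grid_iff, hk]
      apply propext; omega
    simp only [φ, this]
    rw [Finset.sum_ite_eq]
    simp
  have hint : ∀ n, ∫ s in Ioi (0:ℝ), φ n s
      = ∑ k ∈ Finset.range ((n+1)^2), (f (grid n k))^2 * (1/((n:ℝ)+1)) := by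
    intro n
    rw [integral_finsetSum]
    · refine Finset.sum_congr rfl fun k _ => ?_
      have hsub : Ioc (grid n k) (grid n (k+1)) ⊆ Ioi 0 := fun x hx =>
        lt_of_le_of_lt (grid_nonneg n k) hx.1
      rw [setIntegral_indicator measurableSet_Ioc, inter_eq_right.2 hsub, setIntegral_const]
      have : 0 ≤ 1/((n:ℝ)+1) := by positivity
      simp only [measureReal_def, Real.volume_Ioc, smul_eq_mul, grid_succ]
      rw [add_sub_cancel_left, ENNReal.toReal_ofReal this, mul_comm]
    · intro k _
      refine Integrable.integrableOn ?_
      refine IntegrableOn.integrable_indicator ?_ measurableSet_Ioc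
      simp
  simp_rw [← hint]
  refine tendsto_integral_of_dominated_convergence (fun s => (2*C)^2 * (s + 1) ^ (-2:ℝ)) ?_ ?_ ?_ ?_
  · intro n
    refine (Measurable.aestronglyMeasurable ?_)
    refine Finset.measurable_sum _ fun k _ => ?_
    exact measurable_const.indicator measurableSet_Ioc
  · exact (integrableOn_add_rpow_Ioi_of_lt (by norm_num) (by norm_num)).const_mul _
  · intro n
    filter_upwards [ae_restrict_mem measurableSet_Ioi] with s hs
    have hs : 0 < s := hs
    obtain ⟨k, hk, h1, h2⟩ := ceil_bounds n s hs
    rw [hφ n s hs k hk]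
    have hb : 0 ≤ (2*C)^2 * (s + 1) ^ (-2:ℝ) := by positivity
    split_ifs
    · have hg := grid_nonneg n k
      have h3 : |f (grid n k)| ≤ (2 * C) / (s + 1) := by
        refine (hC _ hg).trans ?_
        rw [div_le_div_iff₀ (by positivity) (by positivity)]
        have := step_le n
        rw [grid_succ] at h2
        nlinarith
      rw [Real.norm_eq_abs, abs_pow]
      calc |f (grid n k)|^2 ≤ ((2 * C) / (s + 1))^2 := by gcongr
        _ = _ := by
          rw [Real.rpow_neg (by positivity)]
          norm_cast
          rw [div_pow]; rfl
    · simpa using hb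
  · filter_upwards [ae_restrict_mem measurableSet_Ioi] with s hs
    have hs : 0 < s := hs
    have h1 : Tendsto (fun n : ℕ => grid n (⌈s * ((n:ℝ)+1)⌉₊ - 1)) atTop (nhds s) := by
      have := (grid_ceil_tendsto s hs).sub step_tendsto
      rw [sub_zero] at this
      refine this.congr fun n => ?_
      obtain ⟨k, hk, -, -⟩ := ceil_bounds n s hs
      rw [hk, grid_succ]; simp
    have h2 : Tendsto (fun n : ℕ => (f (grid n (⌈s * ((n:ℝ)+1)⌉₊ - 1)))^2) atTop (nhds ((f s)^2)) :=
      (((hf.pow 2).tendsto s).comp h1)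
    refine h2.congr' ?_
    filter_upwards [ceil_le_sq s] with n hn
    obtain ⟨k, hk, -, -⟩ := ceil_bounds n s hs
    rw [hφ n s hs k hk, if_pos (by omega), hk]; simp

lemma bound_of_isBigO (g : ℝ → ℝ) (hg : Continuous g) (h : g =O[atTop] fun s => 1 / s ^ 2) :
    ∃ C, 0 ≤ C ∧ ∀ s, 0 ≤ s → |g s| ≤ C / (1 + s)^2 := by
  obtain ⟨c, hc0, hc⟩ := h.exists_pos
  rw [IsBigOWith, eventually_atTop] at hc
  obtain ⟨S, hS⟩ := hc
  obtain ⟨D, hD⟩ := (isCompact_Icc (a := (0:ℝ)) (b := max S 1)).exists_bound_of_continuousOn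
    hg.continuousOn
  have hD0 : 0 ≤ D := (norm_nonneg _).trans (hD 0 ⟨le_rfl, le_max_of_le_right zero_le_one⟩)
  refine ⟨4 * c + D * (1 + max S 1)^2, by positivity, fun s hs => ?_⟩
  rw [le_div_iff₀ (by positivity)]
  rcases le_total s (max S 1) with h1 | h1
  · have := hD s ⟨hs, h1⟩
    rw [Real.norm_eq_abs] at this
    have h2 : |g s| * (1+s)^2 ≤ D * (1 + max S 1)^2 := by gcongr
    linarith
  · have hs1 : 1 ≤ s := (le_max_right _ _).trans h1
    have := hS s ((le_max_left _ _).trans h1)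
    have hp : 0 ≤ 1 / s^2 := by positivity
    rw [Real.norm_eq_abs, Real.norm_eq_abs, abs_of_nonneg hp] at this
    have h3 : |g s| * (1+s)^2 ≤ c * (1/s^2) * (1+s)^2 := by gcongr
    have h4 : c * (1/s^2) * (1+s)^2 ≤ 4 * c := by
      rw [mul_one_div, div_mul_eq_mul_div, div_le_iff₀ (by positivity)]
      have : (1+s)^2 ≤ 4 * s^2 := by nlinarith
      nlinarith
    have : 0 ≤ D * (1 + max S 1)^2 := by positivity
    linarith

lemma integrableOn_of_bound (g : ℝ → ℝ) (hg : Continuous g) (C : ℝ)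
    (hC : ∀ s, 0 ≤ s → |g s| ≤ C / (1 + s)^2) (D : ℝ) :
    IntegrableOn (fun s => |g s| * √(D * (1 + s))) (Ioi 0) := by
  have h : IntegrableOn (fun s : ℝ => C * √D * (s + 1) ^ (-(3/2):ℝ)) (Ioi 0) :=
    (integrableOn_add_rpow_Ioi_of_lt (by norm_num) (by norm_num)).const_mul _
  refine Integrable.mono' h (by fun_prop) ?_
  filter_upwards [ae_restrict_mem measurableSet_Ioi] with s hs
  have hs : 0 < s := hs
  have hs1 : 0 < s + 1 := by positivity
  rw [Real.norm_eq_abs, abs_of_nonneg (by positivity), Real.sqrt_mul' _ (by positivity)]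
  have : (s+1) ^ (-(3/2):ℝ) = 1/(1+s)^2 * √(1+s) := by
    rw [Real.sqrt_eq_rpow, add_comm 1 s, one_div, ← Real.rpow_natCast, ← Real.rpow_neg hs1.le,
      ← Real.rpow_add hs1]
    norm_num
  rw [this]
  have := hC s hs.le
  calc |g s| * (√D * √(1+s)) ≤ C / (1+s)^2 * (√D * √(1+s)) := by gcongr
    _ = _ := by ring

lemma integrableOn_of_bound' (g : ℝ → ℝ) (hg : Continuous g) (C : ℝ)
    (hC : ∀ s, 0 ≤ s → |g s| ≤ C / (1 + s)^2) :
    IntegrableOn g (Ioi 0) := by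
  refine Integrable.mono' (integrableOn_of_bound g hg C hC 1) (by fun_prop) ?_
  filter_upwards [ae_restrict_mem measurableSet_Ioi] with s hs
  have hs : 0 < s := hs
  rw [Real.norm_eq_abs]
  refine le_mul_of_one_le_right (abs_nonneg _) ?_
  rw [Real.one_le_sqrt]; linarith

lemma tail_bound (g : ℝ → ℝ) (C : ℝ)
    (hC : ∀ s, 0 ≤ s → |g s| ≤ C / (1 + s)^2) (a : ℝ) (ha : 0 ≤ a) :
    |∫ s in Ioi a, g s| ≤ C / (1 + a) := by
  have hC0 : 0 ≤ C := by simpa using (abs_nonneg _).trans (hC 0 le_rfl)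
  have hd : ∀ x ∈ Ici a, HasDerivAt (fun x : ℝ => - (C / (1 + x))) (C / (1+x)^2) x := by
    intro x hx
    have hx : a ≤ x := hx
    have h1 : HasDerivAt (fun x : ℝ => 1 + x) 1 x := (hasDerivAt_id x).const_add 1
    have hne : (1 + x) ≠ 0 := by linarith
    have := ((h1.inv hne).const_mul C).neg
    convert! this using 1
    ring
  have ht : Tendsto (fun x : ℝ => - (C / (1 + x))) atTop (nhds 0) := by
    have : Tendsto (fun x : ℝ => C / (1 + x)) atTop (nhds 0) :=
      tendsto_const_nhds.div_atTop (tendsto_atTop_add_const_left _ _ tendsto_id)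
    simpa using this.neg
  have hpos : ∀ x ∈ Ioi a, 0 ≤ C / (1+x)^2 := fun x _ => by positivity
  have hI := integral_Ioi_of_hasDerivAt_of_nonneg' hd hpos ht
  have hi := integrableOn_Ioi_deriv_of_nonneg' hd hpos ht
  have := norm_integral_le_of_norm_le (f := g) hi (by
    filter_upwards [ae_restrict_mem measurableSet_Ioi] with s hs
    exact hC s (ha.trans (le_of_lt hs)))
  rw [hI] at this
  simpa using this

lemma sq_integrable (f : ℝ → ℝ) (hf : Continuous f) (C : ℝ)
    (hC : ∀ s, 0 ≤ s → |f s| ≤ C / (1 + s)) : IntegrableOn (fun s => (f s)^2) (Ioi 0) := by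
  have h : IntegrableOn (fun s : ℝ => C^2 * (s + 1) ^ (-2:ℝ)) (Ioi 0) :=
    (integrableOn_add_rpow_Ioi_of_lt (by norm_num) (by norm_num)).const_mul _
  refine Integrable.mono' h (by fun_prop) ?_
  filter_upwards [ae_restrict_mem measurableSet_Ioi] with s hs
  have hs : 0 < s := hs
  rw [Real.norm_eq_abs, abs_pow]
  calc |f s|^2 ≤ (C / (1 + s))^2 := by gcongr; exact hC s hs.le
    _ = _ := by
      rw [Real.rpow_neg (by positivity)]
      norm_cast
      rw [div_pow, add_comm]; rfl


variable {Ω : Type*} [MeasurableSpace Ω] {P : Measure Ω} [IsProbabilityMeasure P]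
  {B : ℝ → Ω → ℝ}

lemma incr_bound (hB : IsBrownianMotion P B) (s t : ℝ) (hs : 0 ≤ s) (ht : 0 ≤ t) :
    Integrable (fun ω => B t ω - B s ω) P ∧ ∫ ω, |B t ω - B s ω| ∂P ≤ √(2 * |t - s|) := by
  wlog hst : s ≤ t generalizing s t
  · have := this t s ht hs (le_of_not_ge hst)
    constructor
    · convert this.1.neg using 1
      ext ω; simp
    · simp_rw [abs_sub_comm (B t _), abs_sub_comm t]
      exact this.2
  have hl := hB.gauss s t hs hst
  have hZm : Measurable (fun ω => B t ω - B s ω) := (hB.meas t).sub (hB.meas s)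
  have h2 : MemLp (fun ω => B t ω - B s ω) 2 P := by
    have h := memLp_id_gaussianReal (μ := 0) (v := (2 * (t - s)).toNNReal) 2
    rw [← hl, memLp_map_measure_iff (by fun_prop) hZm.aemeasurable] at h
    simpa using h
  refine ⟨h2.integrable (by norm_num), ?_⟩
  have hv : ∫ ω, (B t ω - B s ω)^2 ∂P = 2 * (t - s) := by
    have h := variance_fun_id_gaussianReal (μ := 0) (v := (2 * (t - s)).toNNReal)
    rw [variance_eq_integral (by fun_prop)] at h
    simp only [integral_id_gaussianReal, sub_zero] at h
    rw [← hl, integral_map hZm.aemeasurable (by fun_prop)] at h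
    rw [h, Real.coe_toNNReal _ (by linarith)]
  apply Real.le_sqrt_of_sq_le
  have h3 := variance_eq_sub h2.abs
  have h4 := variance_nonneg |fun ω => B t ω - B s ω| P
  rw [h3] at h4
  simp only [Pi.pow_apply, Pi.abs_apply, sq_abs] at h4
  rw [hv] at h4
  rw [abs_of_nonneg (by linarith : 0 ≤ t - s)]
  linarith

lemma prod_int (hB : IsBrownianMotion P B) (hm : Measurable (Function.uncurry B))
    (g : ℝ → ℝ) (hg : Continuous g) (C : ℝ) (hC : ∀ s, 0 ≤ s → |g s| ≤ C / (1 + s)^2)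
    (ρ σ : ℝ → ℝ) (hρ : Measurable ρ) (hσ : Measurable σ)
    (hρ0 : ∀ s, 0 < s → 0 ≤ ρ s) (hσ0 : ∀ s, 0 < s → 0 ≤ σ s) 
    (h : ∀ s, 0 < s → |ρ s - σ s| ≤ 1 + s) :
    Integrable (Function.uncurry fun s ω => g s * (B (ρ s) ω - B (σ s) ω))
      ((volume.restrict (Ioi 0)).prod P) ∧
    ∫ ω, |∫ s in Ioi 0, g s * (B (ρ s) ω - B (σ s) ω)| ∂P ≤
      ∫ s in Ioi 0, |g s| * √(2 * |ρ s - σ s|) := by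
  have hF : Measurable (Function.uncurry fun s ω => g s * (B (ρ s) ω - B (σ s) ω)) := by
    have h1 : Measurable (fun p : ℝ × Ω => B (ρ p.1) p.2) :=
      hm.comp ((hρ.comp measurable_fst).prodMk measurable_snd)
    have h2 : Measurable (fun p : ℝ × Ω => B (σ p.1) p.2) :=
      hm.comp ((hσ.comp measurable_fst).prodMk measurable_snd)
    exact (hg.measurable.comp measurable_fst).mul (h1.sub h2)
  have hI : ∀ s, ∫ ω, ‖g s * (B (ρ s) ω - B (σ s) ω)‖ ∂P
      = |g s| * ∫ ω, |B (ρ s) ω - B (σ s) ω| ∂P := by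
    intro s
    simp_rw [norm_mul, Real.norm_eq_abs]
    rw [integral_const_mul]
  have hdom : IntegrableOn (fun s => |g s| * √(2 * |ρ s - σ s|)) (Ioi 0) := by
    refine Integrable.mono' (integrableOn_of_bound g hg C hC 2) (by fun_prop) ?_
    filter_upwards [ae_restrict_mem measurableSet_Ioi] with s hs
    rw [Real.norm_eq_abs, abs_of_nonneg (by positivity)]
    gcongr
    exact h s hs
  have hle : ∀ᵐ s ∂(volume.restrict (Ioi (0:ℝ))),
      ∫ ω, ‖g s * (B (ρ s) ω - B (σ s) ω)‖ ∂P ≤ |g s| * √(2 * |ρ s - σ s|) := by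
    filter_upwards [ae_restrict_mem measurableSet_Ioi] with s hs
    rw [hI]
    gcongr
    exact (incr_bound hB _ _ (hσ0 s hs) (hρ0 s hs)).2
  have hint : Integrable (Function.uncurry fun s ω => g s * (B (ρ s) ω - B (σ s) ω))
      ((volume.restrict (Ioi 0)).prod P) := by
    rw [integrable_prod_iff hF.aestronglyMeasurable]
    constructor
    · filter_upwards [ae_restrict_mem measurableSet_Ioi] with s hs
      exact (incr_bound hB _ _ (hσ0 s hs) (hρ0 s hs)).1.const_mul (g s)
    · refine Integrable.mono' hdom
        hF.stronglyMeasurable.norm.integral_prod_right.aestronglyMeasurable ?_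
      filter_upwards [hle] with s hs
      rw [Real.norm_eq_abs, abs_of_nonneg (integral_nonneg fun _ => norm_nonneg _)]
      exact hs
  refine ⟨hint, ?_⟩
  calc ∫ ω, |∫ s in Ioi 0, g s * (B (ρ s) ω - B (σ s) ω)| ∂P
      ≤ ∫ ω, (∫ s in Ioi 0, ‖g s * (B (ρ s) ω - B (σ s) ω)‖) ∂P := by
        refine integral_mono_of_nonneg (Eventually.of_forall fun _ => abs_nonneg _)
          hint.norm.integral_prod_right (Eventually.of_forall fun ω => ?_)
        exact norm_integral_le_integral_norm (fun s => g s * (B (ρ s) ω - B (σ s) ω))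
    _ = ∫ s in Ioi 0, ∫ ω, ‖g s * (B (ρ s) ω - B (σ s) ω)‖ ∂P :=
        (integral_integral_swap (f := fun s ω => ‖g s * (B (ρ s) ω - B (σ s) ω)‖) hint.norm).symm
    _ ≤ _ := integral_mono_ae hint.norm.integral_prod_left hdom hle

/-- time discretization -/
noncomputable def tau (n : ℕ) (s : ℝ) : ℝ := grid n (min ⌈s * ((n:ℝ)+1)⌉₊ ((n+1)^2))

lemma tau_meas (n : ℕ) : Measurable (tau n) := by
  have h1 : Measurable fun s : ℝ => ⌈s * ((n:ℝ)+1)⌉₊ :=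
    Nat.measurable_ceil.comp (measurable_id.mul_const _)
  have h2 : Measurable fun j : ℕ => grid n (min j ((n+1)^2)) := measurable_from_nat
  exact h2.comp h1

lemma tau_bound (n : ℕ) (s : ℝ) (hs : 0 < s) : |s - tau n s| ≤ 1 + s := by
  obtain ⟨k, hk, h1, h2⟩ := ceil_bounds n s hs
  have h3 : tau n s ≤ grid n (k+1) := by
    unfold tau; exact grid_mono n (by omega)
  have h4 : 0 ≤ tau n s := grid_nonneg _ _
  rw [grid_succ] at h3
  have := step_le n
  rw [abs_le]; constructor <;> linarith

lemma tau_tendsto (s : ℝ) (hs : 0 < s) : Tendsto (fun n => tau n s) atTop (nhds s) := by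
  refine (grid_ceil_tendsto s hs).congr' ?_
  filter_upwards [ceil_le_sq s] with n hn
  rw [tau, min_eq_left hn]

lemma err_tendsto (g : ℝ → ℝ) (hg : Continuous g) (C : ℝ)
    (hC : ∀ s, 0 ≤ s → |g s| ≤ C / (1 + s)^2) :
    Tendsto (fun n => ∫ s in Ioi 0, |g s| * √(2 * |s - tau n s|)) atTop (nhds 0) := by
  have hz : ∫ s in Ioi (0:ℝ), (0:ℝ) = 0 := by simp
  suffices hsuff : Tendsto (fun n => ∫ s in Ioi (0:ℝ), |g s| * √(2 * |s - tau n s|)) atTop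
      (nhds (∫ s in Ioi (0:ℝ), (0:ℝ))) by rwa [hz] at hsuff
  refine tendsto_integral_of_dominated_convergence (fun s => |g s| * √(2 * (1 + s))) ?_
    (integrableOn_of_bound g hg C hC 2) ?_ ?_
  · intro n
    have := tau_meas n
    fun_prop
  · intro n
    filter_upwards [ae_restrict_mem measurableSet_Ioi] with s hs
    rw [Real.norm_eq_abs, abs_of_nonneg (by positivity)]
    gcongr
    exact tau_bound n s hs
  · filter_upwards [ae_restrict_mem measurableSet_Ioi] with s hs
    have h := tau_tendsto s hs
    have : Continuous fun x : ℝ => |g s| * √(2 * |s - x|) := by fun_prop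
    have h2 := (this.tendsto s).comp h
    simpa [Function.comp_def] using h2

lemma Y_eq (g : ℝ → ℝ) (hg : IntegrableOn g (Ioi 0)) (b : ℝ → ℝ) (hb : b 0 = 0) (n : ℕ) :
    ∫ s in Ioi 0, g s * b (tau n s) = ∑ k : Fin ((n+1)^2),
      (∫ s in Ioi (grid n k), g s) * (b (grid n ((k:ℕ)+1)) - b (grid n k)) := by
  rw [Fin.sum_univ_eq_sum_range
    (fun k => (∫ s in Ioi (grid n k), g s) * (b (grid n (k+1)) - b (grid n k)))]
  have h1 : ∀ s ∈ Ioi (0:ℝ), g s * b (tau n s) = ∑ k ∈ Finset.range ((n+1)^2),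
      (Ioi (grid n k)).indicator (fun s => g s * (b (grid n (k+1)) - b (grid n k))) s := by
    intro s hs
    have h2 : b (tau n s) = ∑ k ∈ Finset.range (min ⌈s * ((n:ℝ)+1)⌉₊ ((n+1)^2)),
        (b (grid n (k+1)) - b (grid n k)) := by
      rw [Finset.sum_range_sub (fun k => b (grid n k))]
      simp [tau, grid, hb]
    rw [h2, Finset.mul_sum]
    simp only [indicator_apply, mem_Ioi, grid_lt_iff]
    rw [← Finset.sum_filter]
    refine Finset.sum_congr ?_ fun _ _ => rfl
    ext k
    simp [and_comm]
  rw [setIntegral_congr_fun measurableSet_Ioi h1, integral_finsetSum]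
  · refine Finset.sum_congr rfl fun k _ => ?_
    have hsub : Ioi (grid n k) ⊆ Ioi 0 := Ioi_subset_Ioi (grid_nonneg n k)
    rw [setIntegral_indicator measurableSet_Ioi, inter_eq_right.2 hsub, integral_mul_const]
  · intro k _
    exact (hg.mul_const _).indicator measurableSet_Ioi

lemma charFun_Y (hB : IsBrownianMotion P B) (f : ℝ → ℝ) (n : ℕ) (u : ℝ) :
    charFun (P.map fun ω => ∑ k : Fin ((n+1)^2),
      f (grid n k) * (B (grid n ((k:ℕ)+1)) ω - B (grid n k) ω)) u
    = Complex.exp (-((u^2 * ∑ k ∈ Finset.range ((n+1)^2),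
        (f (grid n k))^2 * (1/((n:ℝ)+1)) : ℝ) : ℂ)) := by
  have hi := hB.indep ((n+1)^2) (grid n) (grid_mono n)
  have hi2 := hi.comp (fun k x => f (grid n k) * x) (fun k => measurable_const.mul measurable_id)
  have hmeas : ∀ k : Fin ((n+1)^2), AEMeasurable ((fun x => f (grid n k) * x) ∘
      fun ω => B (grid n ((k:ℕ)+1)) ω - B (grid n k) ω) P := by
    intro k
    have h1 := hB.meas (grid n ((k:ℕ)+1))
    have h2 := hB.meas (grid n k)
    exact ((h1.sub h2).const_mul _).aemeasurable
  have hs := iIndepFun.charFun_map_fun_sum_eq_prod hmeas hi2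
  have hs' := congrFun hs u
  simp only [Function.comp_def] at hs'
  rw [hs', Finset.prod_apply]
  have hk : ∀ k : Fin ((n+1)^2), charFun (P.map fun ω =>
      f (grid n k) * (B (grid n ((k:ℕ)+1)) ω - B (grid n k) ω)) u
      = Complex.exp (-((u^2 * ((f (grid n k))^2 * (1/((n:ℝ)+1))) : ℝ) : ℂ)) := by
    intro k
    have h1 := hB.meas (grid n ((k:ℕ)+1))
    have h2 := hB.meas (grid n k)
    have hg := hB.gauss (grid n k) (grid n ((k:ℕ)+1)) (grid_nonneg _ _) (grid_mono n (by omega))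
    have : P.map (fun ω => f (grid n k) * (B (grid n ((k:ℕ)+1)) ω - B (grid n k) ω))
      = (P.map fun ω => B (grid n ((k:ℕ)+1)) ω - B (grid n k) ω).map (fun x => f (grid n k) * x) := by
      rw [Measure.map_map (g := fun x => f (grid n k) * x) (by fun_prop)
        (f := fun ω => B (grid n ((k:ℕ)+1)) ω - B (grid n k) ω) (h1.sub h2)]; rfl
    have hpos : 0 ≤ 2 * (1/((n:ℝ)+1)) := by positivity
    rw [this, hg, gaussianReal_map_const_mul, charFun_gaussianReal, grid_succ, add_sub_cancel_left]
    congr 1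
    simp only [NNReal.coe_mul, Real.coe_toNNReal _ hpos, NNReal.coe_mk]
    push_cast
    ring
  simp_rw [hk]
  rw [← Complex.exp_sum, Finset.sum_neg_distrib, Fin.sum_univ_eq_sum_range
    (fun k => ((u^2 * ((f (grid n k))^2 * (1/((n:ℝ)+1))) : ℝ) : ℂ)), Finset.mul_sum]
  push_cast
  rfl

lemma charFun_diff (X Y : Ω → ℝ) (hX : Measurable X) (hY : Measurable Y)
    (hXY : Integrable (fun ω => X ω - Y ω) P) (u : ℝ) :
    ‖charFun (P.map X) u - charFun (P.map Y) u‖ ≤ |u| * ∫ ω, |X ω - Y ω| ∂P := by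
  rw [charFun_apply_real, charFun_apply_real, integral_map hX.aemeasurable (by fun_prop),
    integral_map hY.aemeasurable (by fun_prop)]
  have hb : ∀ Z : Ω → ℝ, Measurable Z → Integrable (fun ω => Complex.exp (u * Z ω * Complex.I)) P := by
    intro Z hZ
    refine Integrable.of_bound (C := 1) (by fun_prop) (Eventually.of_forall fun ω => ?_)
    rw [← Complex.ofReal_mul, Complex.norm_exp_ofReal_mul_I]
  rw [← integral_sub (hb X hX) (hb Y hY), ← integral_const_mul]
  refine norm_integral_le_of_norm_le (hXY.abs.const_mul _) (Eventually.of_forall fun ω => ?_)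
  have : Complex.exp (u * X ω * Complex.I) - Complex.exp (u * Y ω * Complex.I)
      = Complex.exp ((u * Y ω : ℝ) * Complex.I) *
        (Complex.exp (Complex.I * (u * (X ω - Y ω) : ℝ)) - 1) := by
    rw [mul_sub, ← Complex.exp_add, mul_one]
    push_cast
    congr 2
    ring
  rw [this, norm_mul, Complex.norm_exp_ofReal_mul_I, one_mul]
  refine Real.norm_exp_I_mul_ofReal_sub_one_le.trans ?_
  rw [norm_mul, Real.norm_eq_abs, Real.norm_eq_abs]

lemma main_cont (hB : IsBrownianMotion P B) (hc : ∀ ω, Continuous fun s => B s ω)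
    (h0 : ∀ ω, B 0 ω = 0)
    (g : ℝ → ℝ) (hg : Continuous g) (C : ℝ) (hC : ∀ s, 0 ≤ s → |g s| ≤ C / (1 + s)^2)
    (f : ℝ → ℝ) (hf : Continuous f) (hfg : ∀ a, 0 ≤ a → ∫ s in Ioi a, g s = f a) :
    (∀ᵐ ω ∂P, IntegrableOn (fun s => g s * B s ω) (Ioi 0)) ∧
    ∫ ω, Real.exp ((1/2) * ∫ s in Ioi 0, g s * B s ω) ∂P
      = Real.exp ((1/4) * ∫ s in Ioi 0, (f s)^2) := by
  have hm : Measurable (Function.uncurry B) :=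
    measurable_uncurry_of_continuous_of_measurable hc hB.meas
  have hfC : ∀ s, 0 ≤ s → |f s| ≤ C / (1 + s) := fun s hs => by
    rw [← hfg s hs]; exact tail_bound g C hC s hs
  have hgi := integrableOn_of_bound' g hg C hC
  have i1 := (prod_int hB hm g hg C hC (fun s => s) (fun _ => 0) measurable_id measurable_const
    (fun s hs => hs.le) (fun _ _ => le_rfl)
    (fun s hs => by rw [sub_zero, abs_of_pos hs]; linarith)).1
  simp only [h0, sub_zero] at i1
  have hA : ∀ᵐ ω ∂P, IntegrableOn (fun s => g s * B s ω) (Ioi 0) := i1.prod_left_ae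
  refine ⟨hA, ?_⟩
  set X : Ω → ℝ := fun ω => ∫ s in Ioi 0, g s * B s ω with hX
  set Y : ℕ → Ω → ℝ := fun n ω => ∑ k : Fin ((n+1)^2),
      f (grid n k) * (B (grid n ((k:ℕ)+1)) ω - B (grid n k) ω) with hY
  have hYeq : ∀ n ω, ∫ s in Ioi 0, g s * B (tau n s) ω = Y n ω := by
    intro n ω
    rw [Y_eq g hgi (fun s => B s ω) (h0 ω) n]
    refine Finset.sum_congr rfl fun k _ => ?_
    rw [hfg _ (grid_nonneg _ _)]
  have hXm : Measurable X := by
    have hF : Measurable (Function.uncurry fun s ω => g s * B s ω) :=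
      (hg.measurable.comp measurable_fst).mul hm
    exact hF.stronglyMeasurable.integral_prod_left.measurable
  have hYm : ∀ n, Measurable (Y n) := by
    intro n
    refine Finset.measurable_sum _ fun k _ => ?_
    exact ((hB.meas _).sub (hB.meas _)).const_mul _
  have hD : ∀ n, Integrable (fun ω => X ω - Y n ω) P ∧
      ∫ ω, |X ω - Y n ω| ∂P ≤ ∫ s in Ioi 0, |g s| * √(2 * |s - tau n s|) := by
    intro n
    have j := prod_int hB hm g hg C hC (fun s => s) (tau n) measurable_id (tau_meas n)
      (fun s hs => hs.le) (fun s _ => grid_nonneg _ _) (tau_bound n)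
    have he : ∀ᵐ ω ∂P, ∫ s in Ioi 0, g s * (B s ω - B (tau n s) ω) = X ω - Y n ω := by
      filter_upwards [hA, j.1.prod_left_ae] with ω h1 h2
      have h2 : IntegrableOn (fun s => g s * (B s ω - B (tau n s) ω)) (Ioi 0) := h2
      have h3 := integral_sub h1 h2
      have h4 : ∀ s, g s * B s ω - g s * (B s ω - B (tau n s) ω) = g s * B (tau n s) ω := by
        intro s; ring
      simp only [h4, hYeq] at h3
      rw [h3]; simp [hX]
    constructor
    · exact j.1.integral_prod_right.congr he
    · refine le_trans (le_of_eq ?_) j.2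
      refine integral_congr_ae ?_
      filter_upwards [he] with ω h
      rw [h]
  set V : ℝ := ∫ s in Ioi 0, (f s)^2 with hV
  have hV0 : 0 ≤ V := integral_nonneg fun _ => sq_nonneg _
  have hlaw : P.map X = gaussianReal 0 (2 * V).toNNReal := by
    have : IsProbabilityMeasure (P.map X) := Measure.isProbabilityMeasure_map hXm.aemeasurable
    refine Measure.ext_of_charFun ?_
    ext u
    have t1 : Tendsto (fun n => charFun (P.map (Y n)) u) atTop (nhds (charFun (P.map X) u)) := by
      rw [tendsto_iff_norm_sub_tendsto_zero]
      have t0 := (err_tendsto g hg C hC).const_mul |u|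
      rw [mul_zero] at t0
      refine squeeze_zero (fun _ => norm_nonneg _) (fun n => ?_) t0
      rw [norm_sub_rev]
      refine (charFun_diff X (Y n) hXm (hYm n) (hD n).1 u).trans ?_
      exact mul_le_mul_of_nonneg_left (hD n).2 (abs_nonneg _)
    have t2 : Tendsto (fun n => charFun (P.map (Y n)) u) atTop
        (nhds (Complex.exp (-((u^2 * V : ℝ) : ℂ)))) := by
      simp only [hY, charFun_Y hB f]
      have := (riemann f hf C hfC).const_mul (u^2)
      have hcont : Continuous fun x : ℝ => Complex.exp (-(x : ℂ)) := by fun_prop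
      exact (hcont.tendsto _).comp this
    rw [tendsto_nhds_unique t1 t2, charFun_gaussianReal, Real.coe_toNNReal _ (by positivity)]
    congr 1
    push_cast
    ring
  have hmgf := mgf_gaussianReal hlaw (1/2)
  rw [mgf] at hmgf
  rw [hmgf, Real.coe_toNNReal _ (by positivity)]
  congr 1
  ring

end Aux17

theorem stmt17 {Ω : Type*} [MeasurableSpace Ω] (P : Measure Ω) [IsProbabilityMeasure P]
    (B : ℝ → Ω → ℝ) (hB : IsBrownianMotion P B)
    (m : ℝ → ℝ) (hmC2 : ContDiff ℝ 2 m)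
    (hm'' : (fun s => deriv (deriv m) s) =O[atTop] fun s => 1 / s ^ 2) :
    ∃ v : ℝ, Tendsto (deriv m) atTop (nhds v) ∧
      IntegrableOn (fun s => (deriv m s - v) ^ 2) (Set.Ioi (0:ℝ)) ∧
      (∀ᵐ ω ∂P, IntegrableOn (fun s => deriv (deriv m) s * B s ω) (Set.Ioi (0:ℝ))) ∧
      (∫ ω, Real.exp ((1/2) * ∫ s in Set.Ioi (0:ℝ), deriv (deriv m) s * B s ω) ∂P) =
        Real.exp ((1/4) * ∫ s in Set.Ioi (0:ℝ), (deriv m s - v) ^ 2) := by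

  have hd1 : ContDiff ℝ 1 (deriv m) := by
    have : ContDiff ℝ (1+1) m := by simpa [one_add_one_eq_two] using hmC2
    exact (contDiff_succ_iff_deriv.1 this).2.2
  have hfc : Continuous (deriv m) := hd1.continuous
  have hg : Continuous (deriv (deriv m)) := hd1.continuous_deriv le_rfl
  have hderiv : ∀ x, HasDerivAt (deriv m) (deriv (deriv m) x) x := fun x =>
    (hd1.differentiable (by norm_num) x).hasDerivAt
  obtain ⟨C, -, hC⟩ := Aux17.bound_of_isBigO _ hg hm''
  have hgi := Aux17.integrableOn_of_bound' _ hg C hC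
  have hv := tendsto_limUnder_of_hasDerivAt_of_integrableOn_Ioi (fun x _ => hderiv x) hgi
  set v := limUnder atTop (deriv m)
  have hfg : ∀ a, 0 ≤ a → ∫ s in Ioi a, deriv (deriv m) s = v - deriv m a := fun a ha =>
    integral_Ioi_of_hasDerivAt_of_tendsto' (fun x _ => hderiv x)
      (hgi.mono_set (Ioi_subset_Ioi ha)) hv
  have hfC : ∀ s, 0 ≤ s → |v - deriv m s| ≤ C / (1 + s) := fun s hs => by
    rw [← hfg s hs]; exact Aux17.tail_bound _ C hC s hs
  have hfc' : Continuous fun s => v - deriv m s := by fun_prop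
  have hsq := Aux17.sq_integrable _ hfc' C hfC
  have hsymm : ∀ s, (v - deriv m s)^2 = (deriv m s - v)^2 := fun s => by ring
  simp only [hsymm] at hsq
  refine ⟨v, hv, hsq, ?_⟩
  -- continuous modification
  have hgood : ∀ᵐ ω ∂P, Continuous (fun s => B s ω) ∧ B 0 ω = 0 := hB.cont.and hB.init
  obtain ⟨A, hAsub, hAm, hA0⟩ := exists_measurable_superset_of_null (ae_iff.1 hgood)
  classical
  let B' : ℝ → Ω → ℝ := fun s ω => if ω ∈ A then 0 else B s ω
  have hgood' : ∀ ω, ω ∉ A → Continuous (fun s => B s ω) ∧ B 0 ω = 0 := by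
    intro ω hω
    by_contra hcon
    exact hω (hAsub hcon)
  have hae : ∀ᵐ ω ∂P, ∀ s, B' s ω = B s ω := by
    have : ∀ᵐ ω ∂P, ω ∉ A := measure_eq_zero_iff_ae_notMem.1 hA0
    filter_upwards [this] with ω hω s
    simp [B', hω]
  have hc' : ∀ ω, Continuous fun s => B' s ω := by
    intro ω
    by_cases hω : ω ∈ A
    · simp only [B', hω, if_true]; exact continuous_const
    · simp only [B', hω, if_false]; exact (hgood' ω hω).1
  have h0' : ∀ ω, B' 0 ω = 0 := by
    intro ω
    by_cases hω : ω ∈ A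
    · simp only [B', hω, if_true]
    · simp only [B', hω, if_false]; exact (hgood' ω hω).2
  have hB' : IsBrownianMotion P B' :=
    { cont := Eventually.of_forall hc'
      init := Eventually.of_forall h0'
      meas := fun s => Measurable.ite hAm measurable_const (hB.meas s)
      indep := fun n t ht => (hB.indep n t ht).congr fun i => by
        filter_upwards [hae] with ω h
        simp only [h]
      gauss := fun s t hs hst => by
        rw [← hB.gauss s t hs hst]
        refine Measure.map_congr ?_
        filter_upwards [hae] with ω h
        simp only [h] }
  obtain ⟨r1, r2⟩ := Aux17.main_cont hB' hc' h0' _ hg C hC _ hfc' hfg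
  constructor
  · filter_upwards [r1, hae] with ω h1 h2
    simpa only [h2] using h1
  · simp only [hsymm] at r2
    rw [← r2]
    refine integral_congr_ae ?_
    filter_upwards [hae] with ω h
    simp only [h]
end
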